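/- arXiv:1104.0315 — 10 statements merged into one kernel-verified Lean document; each statement's English description precedes it below -/
import Mathlib

section
/- Every finite non-cyclic group G admits an unbalanced pair: there exist finite G-sets X and Y such that for every g ∈ G the number of fixed points of g on X equals the number of fixed points of g on Y, and such that for some natural number n the number of G-orbits of cardinality n in X differs from the number of G-orbits of cardinality n in Y. -/
open MulAction

/-- Two `G`-sets are *linearly equivalent* if every `g ∈ G` has the same number of
fixed points in each. -/
def IsLinEquiv (G : Type) [Group G] (X Y : Type) [MulAction G X] [MulAction G Y] : Prop :=
  ∀ g : G, Nat.card (fixedBy X g) = Nat.card (fixedBy Y g)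

/-- The number of `G`-orbits of cardinality `n` in the `G`-set `X`. -/
noncomputable def orbitCountOfSize (G : Type) [Group G] (X : Type) [MulAction G X] (n : ℕ) : ℕ :=
  Nat.card {o : orbitRel.Quotient G X // Nat.card o.orbit = n}

/-- An *unbalanced pair* of `G`-sets: linearly equivalent, but differing in the number of
orbits of some cardinality. -/
def IsUnbalancedPair (G : Type) [Group G] (X Y : Type) [MulAction G X] [MulAction G Y] : Prop :=
  IsLinEquiv G X Y ∧ ∃ n : ℕ, orbitCountOfSize G X n ≠ orbitCountOfSize G Y n

/-- `f` is the table of marks of a finite `G`-set. -/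
def IsMark (G : Type) [Group G] (f : Set G → ℤ) : Prop :=
  ∃ (X : Type) (_ : Fintype X) (_ : MulAction G X),
    ∀ S : Set G, f S = (Nat.card {x : X // ∀ g ∈ S, g • x = x} : ℤ)

lemma IsMark.add {G : Type} [Group G] {f f' : Set G → ℤ} (h : IsMark G f) (h' : IsMark G f') :
    IsMark G (f + f') := by
  obtain ⟨X, iX, aX, hX⟩ := h
  obtain ⟨Y, iY, aY, hY⟩ := h'
  refine ⟨X ⊕ Y, inferInstance, inferInstance, fun S => ?_⟩
  rw [Pi.add_apply, hX, hY, Nat.card_congr (Equiv.subtypeSum), Nat.card_sum]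
  simp [Sum.smul_inl, Sum.smul_inr]

lemma IsMark.mul {G : Type} [Group G] {f f' : Set G → ℤ} (h : IsMark G f) (h' : IsMark G f') :
    IsMark G (f * f') := by
  obtain ⟨X, iX, aX, hX⟩ := h
  obtain ⟨Y, iY, aY, hY⟩ := h'
  refine ⟨X × Y, inferInstance, inferInstance, fun S => ?_⟩
  rw [Pi.mul_apply, hX, hY, ← Nat.cast_mul, ← Nat.card_prod, ← Nat.card_congr
    (Equiv.subtypeProdEquivProd (p := fun x : X => ∀ g ∈ S, g • x = x)
      (q := fun x : Y => ∀ g ∈ S, g • x = x))]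
  congr 1
  apply Nat.card_congr
  apply Equiv.subtypeEquivRight
  rintro ⟨x, y⟩
  simp only [Prod.smul_mk, Prod.mk.injEq]
  grind

lemma IsMark.natCast {G : Type} [Group G] (k : ℕ) : IsMark G (k : Set G → ℤ) := by
  refine ⟨Fin k, inferInstance,
    { smul := fun _ x => x, one_smul := fun _ => rfl, mul_smul := fun _ _ _ => rfl }, fun S => ?_⟩
  have : ∀ x : Fin k, ∀ g ∈ S, (fun (_ : G) (x : Fin k) => x) g x = x := fun _ _ _ => rfl
  have e : Nat.card {x : Fin k // ∀ g ∈ S, (fun (_ : G) (x : Fin k) => x) g x = x} = k := by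
    rw [Nat.card_congr (Equiv.subtypeUnivEquiv this)]; simp
  exact congrArg (Nat.cast : ℕ → ℤ) e.symm

/-- Differences of marks. -/
def IsVirt (G : Type) [Group G] (f : Set G → ℤ) : Prop :=
  ∃ a b, IsMark G a ∧ IsMark G b ∧ f = a - b

lemma IsVirt.mul {G : Type} [Group G] {f f' : Set G → ℤ} (h : IsVirt G f) (h' : IsVirt G f') :
    IsVirt G (f * f') := by
  obtain ⟨a, b, ha, hb, rfl⟩ := h
  obtain ⟨c, d, hc, hd, rfl⟩ := h'
  exact ⟨a * c + b * d, a * d + b * c, (ha.mul hc).add (hb.mul hd), (ha.mul hd).add (hb.mul hc),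
    by ring⟩

lemma IsVirt.one {G : Type} [Group G] : IsVirt G (1 : Set G → ℤ) :=
  ⟨(1 : ℕ), (0 : ℕ), IsMark.natCast 1, IsMark.natCast 0, by simp⟩

/-- Marks of `G ⧸ zpowers g`. -/
noncomputable def cycMark (G : Type) [Group G] (g : G) (S : Set G) : ℤ :=
  (Nat.card {x : G ⧸ Subgroup.zpowers g // ∀ g ∈ S, g • x = x} : ℤ)

lemma orbitCount_one (G : Type) [Group G] (X : Type) [MulAction G X] :
    orbitCountOfSize G X 1 = Nat.card {x : X // ∀ g ∈ (Set.univ : Set G), g • x = x} := by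
  unfold orbitCountOfSize
  symm
  refine Nat.card_congr (Equiv.ofBijective
    (fun x => ⟨Quotient.mk'' x.1, ?_⟩) ⟨?_, ?_⟩)
  · rw [orbitRel.Quotient.orbit_mk]
    have : orbit G x.1 = {x.1} := by
      ext y
      simp only [mem_orbit_iff, Set.mem_singleton_iff]
      constructor
      · rintro ⟨g, rfl⟩; exact x.2 g trivial
      · rintro rfl; exact ⟨1, one_smul _ _⟩
    rw [this]; simp
  · rintro ⟨x, hx⟩ ⟨y, hy⟩ hxy
    simp only [Subtype.mk.injEq] at hxy ⊢
    obtain ⟨g, hg⟩ := (Quotient.eq''.1 hxy : x ∈ orbit G y)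
    rw [← hg]; exact hy g trivial
  · rintro ⟨o, ho⟩
    induction o using Quotient.inductionOn' with
    | h x =>
    rw [orbitRel.Quotient.orbit_mk] at ho
    refine ⟨⟨x, fun g _ => ?_⟩, rfl⟩
    have := (Nat.card_eq_one_iff_unique.1 ho).1
    exact congrArg Subtype.val
      (Subsingleton.elim (⟨g • x, mem_orbit x g⟩ : orbit G x) ⟨x, mem_orbit_self x⟩)

/-- Every finite non-cyclic group admits an unbalanced pair of finite `G`-sets. -/
theorem every_finite_noncyclic_group_has_unbalanced_pair
    (G : Type) [Group G] [Fintype G] (h : ¬ IsCyclic G) :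
    ∃ (X Y : Type) (_ : Fintype X) (_ : Fintype Y)
      (ix : MulAction G X) (iy : MulAction G Y),
      @IsUnbalancedPair G _ X Y ix iy := by
  classical
  have key : IsVirt G (∏ g : G, ∏ k ∈ Finset.Icc 1 (Fintype.card G),
      ((k : Set G → ℤ) - cycMark G g)) := by
    refine Finset.prod_induction _ _ (fun _ _ => IsVirt.mul) IsVirt.one fun g _ => ?_
    refine Finset.prod_induction _ _ (fun _ _ => IsVirt.mul) IsVirt.one fun k _ => ?_
    exact ⟨_, _, IsMark.natCast k,
      ⟨G ⧸ Subgroup.zpowers g, inferInstance, inferInstance, fun S => rfl⟩, rfl⟩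
  obtain ⟨a, b, ⟨X, iX, aX, hX⟩, ⟨Y, iY, aY, hY⟩, hab⟩ := key
  refine ⟨X, Y, iX, iY, aX, aY, fun g => ?_, 1, ?_⟩
  · have h1 := congrFun hab {g}
    have h0 : (∏ g : G, ∏ k ∈ Finset.Icc 1 (Fintype.card G),
      ((k : Set G → ℤ) - cycMark G g)) {g} = 0 := by
      rw [Finset.prod_apply]
      refine Finset.prod_eq_zero (Finset.mem_univ g) ?_
      rw [Finset.prod_apply]
      refine Finset.prod_eq_zero
        (i := Nat.card {x : G ⧸ Subgroup.zpowers g // ∀ g' ∈ ({g} : Set G), g' • x = x}) ?_ ?_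
      · rw [Finset.mem_Icc]
        constructor
        · have : Nonempty {x : G ⧸ Subgroup.zpowers g // ∀ g' ∈ ({g} : Set G), g' • x = x} := by
            refine ⟨((1 : G) : G ⧸ Subgroup.zpowers g), ?_⟩
            rintro _ rfl
            rw [MulAction.Quotient.smul_mk, eq_comm, QuotientGroup.eq]
            simp
          exact Nat.card_pos
        · rw [← Nat.card_eq_fintype_card]
          exact (Finite.card_subtype_le _).trans
            (Nat.card_le_card_of_surjective _ (QuotientGroup.mk_surjective))
      · simp [cycMark]
    rw [h0, Pi.sub_apply, hX, hY] at h1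
    have h2 : (Nat.card {x : X // ∀ g' ∈ ({g} : Set G), g' • x = x})
      = Nat.card {x : Y // ∀ g' ∈ ({g} : Set G), g' • x = x} := by omega
    simp only [Set.mem_singleton_iff, forall_eq] at h2
    exact h2
  · rw [orbitCount_one, orbitCount_one]
    intro he
    have h1 := congrFun hab Set.univ
    rw [Pi.sub_apply, hX, hY, he, sub_self, Finset.prod_apply, Finset.prod_eq_zero_iff] at h1
    obtain ⟨g, -, h1⟩ := h1
    rw [Finset.prod_apply, Finset.prod_eq_zero_iff] at h1
    obtain ⟨k, hk, h1⟩ := h1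
    have hz : cycMark G g Set.univ = 0 := by
      have : IsEmpty {x : G ⧸ Subgroup.zpowers g // ∀ g ∈ (Set.univ : Set G), g • x = x} := by
        refine ⟨fun ⟨x, hx⟩ => h ⟨g, fun y => ?_⟩⟩
        induction x using QuotientGroup.induction_on with
        | H z =>
        have := hx (z * y * z⁻¹) trivial
        rw [MulAction.Quotient.smul_mk, eq_comm, QuotientGroup.eq] at this
        have h3 : y ∈ Subgroup.zpowers g := by simpa [mul_assoc] using this
        exact h3
      rw [cycMark, Nat.card_of_isEmpty, Nat.cast_zero]
    rw [Pi.sub_apply, hz] at h1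
    simp at h1 hk
    omega
end

section
/- A finite group G is cyclic if and only if any two linearly equivalent finite G-sets are isomorphic, i.e. whenever finite G-sets X and Y satisfy that every g ∈ G has the same number of fixed points on X as on Y, there exists a G-equivariant bijection between X and Y. (This is the statement that the natural map from the Burnside ring Ω(G) to the representation ring R(G), sending X to ℂ[X], is injective if and only if G is cyclic.) -/
open MulAction

/-- The complement of an orbit, as an invariant subset. -/
def orbCompl (G : Type) [Group G] {X : Type} [MulAction G X] (x : X) : SubMulAction G X where
  carrier := (orbit G x)ᶜ
  smul_mem' := by
    intro c z hz h
    refine hz (orbit_eq_iff.1 ?_)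
    rw [← orbit_eq_iff.2 h, orbit_eq_iff.2 (mem_orbit z c)]

theorem card_fixed_split (G : Type) [Group G] {X : Type} [Finite X] [MulAction G X] (x : X)
    (g : G) : Nat.card (fixedBy X g) =
      Nat.card (fixedBy (orbit G x) g) + Nat.card (fixedBy (orbCompl G x) g) := by
  classical
  rw [← Nat.card_sum]
  refine (Nat.card_congr (Equiv.ofBijective
    (Sum.elim (fun z => ⟨z.1.1, congrArg Subtype.val z.2⟩) (fun z => ⟨z.1.1, congrArg Subtype.val z.2⟩)) ⟨?_, ?_⟩)).symm
  · rintro (⟨⟨a, ha⟩, ha2⟩ | ⟨⟨a, ha⟩, ha2⟩) (⟨⟨b, hb⟩, hb2⟩ | ⟨⟨b, hb⟩, hb2⟩) h <;>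
      (replace h : a = b := congrArg Subtype.val h; subst h)
    · rfl
    · exact absurd ha hb
    · exact absurd hb ha
    · rfl
  · rintro ⟨z, hz⟩
    by_cases h : z ∈ orbit G x
    · exact ⟨Sum.inl ⟨⟨z, h⟩, Subtype.ext hz⟩, rfl⟩
    · exact ⟨Sum.inr ⟨⟨z, h⟩, Subtype.ext hz⟩, rfl⟩

theorem orbit_iso (G : Type) [Group G] {X Y : Type} [MulAction G X] [MulAction G Y]
    (x : X) (y : Y) (h : stabilizer G x = stabilizer G y) :
    ∃ f : orbit G x ≃ orbit G y, ∀ (g : G) (z : orbit G x), f (g • z) = g • f z := by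
  have key : ∀ g : G, (((orbitEquivQuotientStabilizer G x).trans
      ((Subgroup.quotientEquivOfEq h).trans (orbitEquivQuotientStabilizer G y).symm))
        ⟨g • x, mem_orbit x g⟩ : Y) = g • y := by
    intro g
    have : orbitEquivQuotientStabilizer G x ⟨g • x, mem_orbit x g⟩ = (g : G ⧸ stabilizer G x) := by
      rw [← Equiv.eq_symm_apply]
      exact Subtype.ext (orbitEquivQuotientStabilizer_symm_apply G x g).symm
    simp only [Equiv.trans_apply, this, Subgroup.quotientEquivOfEq_mk]
    exact orbitEquivQuotientStabilizer_symm_apply G y g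
  refine ⟨((orbitEquivQuotientStabilizer G x).trans
      ((Subgroup.quotientEquivOfEq h).trans (orbitEquivQuotientStabilizer G y).symm)),
      fun g z => Subtype.ext ?_⟩
  · obtain ⟨z, k, rfl⟩ := z
    have h1 := key (g * k)
    have h2 := key k
    rw [orbit.coe_smul]
    refine Eq.trans ?_ (h1.trans ?_)
    · congr 2
      exact Subtype.ext (mul_smul g k x).symm
    · rw [mul_smul]
      exact congrArg (g • ·) h2.symm

theorem glue (G : Type) [Group G] {X Y : Type} [MulAction G X] [MulAction G Y]
    (x : X) (y : Y) (f : orbit G x ≃ orbit G y) (hf : ∀ (g : G) z, f (g • z) = g • f z)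
    (e : orbCompl G x ≃ orbCompl G y) (he : ∀ (g : G) z, e (g • z) = g • e z) :
    ∃ e : X ≃ Y, ∀ (g : G) (x : X), e (g • x) = g • e x := by
  classical
  let e' : ((orbit G x)ᶜ : Set X) ≃ ((orbit G y)ᶜ : Set Y) := e
  let E : X ≃ Y := (Equiv.Set.sumCompl (orbit G x)).symm.trans
    ((Equiv.sumCongr f e').trans (Equiv.Set.sumCompl (orbit G y)))
  have h1 : ∀ z : orbit G x, E z = f z := by
    intro z
    simp [E]
  have h2 : ∀ z : orbCompl G x, E z = e z := by
    rintro ⟨z, hz⟩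
    simp only [E, Equiv.trans_apply]
    rw [Equiv.Set.sumCompl_symm_apply_of_notMem (s := orbit G x) hz]
    rfl
  refine ⟨E, fun g z => ?_⟩
  by_cases h : z ∈ orbit G x
  · have a := h1 (g • ⟨z, h⟩)
    rw [hf, orbit.coe_smul, orbit.coe_smul, ← h1] at a
    exact a
  · have a := h2 (g • ⟨z, h⟩)
    rw [he, SubMulAction.val_smul, SubMulAction.val_smul, ← h2] at a
    exact a

theorem exists_stab_ge (G : Type) [Group G] [IsCyclic G] {X Y : Type} [Finite X] [Finite Y]
    [MulAction G X] [MulAction G Y]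
    (h : ∀ g : G, Nat.card (fixedBy X g) = Nat.card (fixedBy Y g)) (x : X) :
    ∃ y : Y, stabilizer G x ≤ stabilizer G y := by
  obtain ⟨k, hk⟩ := (Subgroup.isCyclic_iff_exists_zpowers_eq_top (stabilizer G x)).1 inferInstance
  have hx : k ∈ stabilizer G x := hk ▸ Subgroup.mem_zpowers k
  have : Nonempty (fixedBy X k) := ⟨⟨x, hx⟩⟩
  have h0 : 0 < Nat.card (fixedBy Y k) := h k ▸ Nat.card_pos
  obtain ⟨⟨y, hy⟩⟩ := (Nat.card_pos_iff.1 h0).1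
  refine ⟨y, ?_⟩
  rw [← hk, Subgroup.zpowers_le]
  exact hy

theorem cyc_dir (G : Type) [Group G] [Finite G] [IsCyclic G] (n : ℕ) :
    ∀ (X Y : Type) [Finite X] [Finite Y] [MulAction G X] [MulAction G Y],
        Nat.card X = n →
        (∀ g : G, Nat.card (fixedBy X g) = Nat.card (fixedBy Y g)) →
        ∃ e : X ≃ Y, ∀ (g : G) (x : X), e (g • x) = g • e x := by
  induction n using Nat.strong_induction_on with
  | _ n ih =>
  intro X Y _ _ _ _ hn h
  rcases isEmpty_or_nonempty X with hX | hX
  · have : IsEmpty Y := by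
      by_contra hY
      rw [not_isEmpty_iff] at hY
      obtain ⟨y⟩ := hY
      obtain ⟨x, -⟩ := exists_stab_ge G (fun g => (h g).symm) y
      exact hX.elim x
    exact ⟨Equiv.equivOfIsEmpty X Y, fun g x => hX.elim x⟩
  · obtain ⟨x, hx⟩ := Finite.exists_max (fun x : X => Nat.card (stabilizer G x))
    obtain ⟨y, hy⟩ := exists_stab_ge G h x
    obtain ⟨z, hz⟩ := exists_stab_ge G (fun g => (h g).symm) y
    have hs : stabilizer G x = stabilizer G y :=
      Subgroup.eq_of_le_of_card_ge hy ((Subgroup.card_le_of_le hz).trans (hx z))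
    obtain ⟨f, hf⟩ := orbit_iso G x y hs
    have hlt : Nat.card (orbCompl G x) < n := by
      rw [← hn]
      exact Finite.card_subtype_lt (p := fun z => z ∈ orbCompl G x) (x := x)
        (fun hh => hh (mem_orbit_self x))
    obtain ⟨e, he⟩ := ih _ hlt (orbCompl G x) (orbCompl G y) rfl (by
      intro g
      have h1 := card_fixed_split G x g
      have h2 := card_fixed_split G y g
      have h3 : Nat.card (fixedBy (orbit G x) g) = Nat.card (fixedBy (orbit G y) g) := by
        refine Nat.card_congr (f.subtypeEquiv fun a => ?_)
        rw [mem_fixedBy, mem_fixedBy, ← hf, f.apply_eq_iff_eq]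
      have := h g
      omega)
    exact glue G x y f hf e he

theorem card_fixed_quot (G : Type) [Group G] [Fintype G] (H : Subgroup G) (g : G) :
    Nat.card H * Nat.card (fixedBy (G ⧸ H) g) = Nat.card {x : G // x⁻¹ * g * x ∈ H} := by
  rw [← Nat.card_prod, ← Nat.card_congr (QuotientGroup.preimageMkEquivSubgroupProdSet H _)]
  refine Nat.card_congr (Equiv.subtypeEquivRight fun x => ?_)
  rw [Set.mem_preimage, mem_fixedBy, eq_comm]
  change ((x : G) : G ⧸ H) = ((g * x : G) : G ⧸ H) ↔ _
  rw [QuotientGroup.eq, mul_assoc]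

theorem exists_mob (P : Type) [PartialOrder P] [Fintype P] :
    ∃ m : P → ℤ, ∀ d, (∑ᶠ c ∈ Set.Ici d, m c) = 1 := by
  classical
  have wf : WellFounded (fun a b : P => b < a) := wellFounded_gt
  let m : P → ℤ := wf.fix (fun d ih => 1 - ∑ c : {c // d < c}, ih c.1 c.2)
  have hm : ∀ d, m d = 1 - ∑ c : {c // d < c}, m c := fun d => wf.fix_eq _ d
  refine ⟨m, fun d => ?_⟩
  have : Set.Ici d = insert d (Set.Ioi d) := (Set.Ioi_insert (a := d)).symm
  rw [this, finsum_mem_insert _ (by simp) (Set.toFinite _), hm d,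
    finsum_mem_eq_finite_toFinset_sum _ (Set.toFinite _)]
  have h2 : ∑ c ∈ (Set.toFinite (Set.Ioi d)).toFinset, m c = ∑ c : {c // d < c}, m c :=
    Finset.sum_subtype (p := fun c => d < c) _ (by simp) _
  rw [h2]
  ring

theorem card_fixed_sigma (G : Type) [Group G] [Fintype G] (I : Type) [Fintype I]
    (H : I → Subgroup G) (g : G) :
    Nat.card (fixedBy (Σ i, G ⧸ H i) g) = ∑ i, Nat.card (fixedBy (G ⧸ H i) g) := by
  rw [← Nat.card_sigma]
  refine Nat.card_congr ⟨fun z => ⟨z.1.1, z.1.2, ?_⟩, fun z => ⟨⟨z.1, z.2.1⟩, ?_⟩,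
    fun _ => rfl, fun _ => rfl⟩
  · obtain ⟨⟨i, q⟩, hz⟩ := z
    have : (⟨i, g • q⟩ : Σ i, G ⧸ H i) = ⟨i, q⟩ := hz
    simpa using this
  · obtain ⟨i, q, hq⟩ := z
    exact congrArg (Sigma.mk i) hq

theorem noncyc_dir (G : Type) [Group G] [Fintype G]
    (h : ∀ (X Y : Type) [Fintype X] [Fintype Y] [MulAction G X] [MulAction G Y],
        (∀ g : G, Nat.card (fixedBy X g) = Nat.card (fixedBy Y g)) →
        ∃ e : X ≃ Y, ∀ (g : G) (x : X), e (g • x) = g • e x) : IsCyclic G := by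
  classical
  let P := {C : Subgroup G // IsCyclic C}
  obtain ⟨m, hm⟩ := exists_mob P
  have key : ∀ g : G, ∑ C : P, m C * (Nat.card C.1 * Nat.card (fixedBy (G ⧸ C.1) g) : ℤ)
      = Nat.card G := by
    intro g
    have e1 : ∀ C : P, m C * (Nat.card C.1 * Nat.card (fixedBy (G ⧸ C.1) g) : ℤ)
        = ∑ x : G, if x⁻¹ * g * x ∈ C.1 then m C else 0 := by
      intro C
      rw [← Nat.cast_mul, card_fixed_quot, Nat.card_eq_fintype_card, Fintype.card_subtype,
        ← Finset.sum_filter, Finset.sum_const, nsmul_eq_mul, mul_comm]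
    rw [Finset.sum_congr rfl fun C _ => e1 C, Finset.sum_comm]
    have e2 : ∀ x : G, (∑ C : P, if x⁻¹ * g * x ∈ C.1 then m C else 0) = 1 := by
      intro x
      rw [← hm ⟨Subgroup.zpowers (x⁻¹ * g * x), inferInstance⟩,
        finsum_mem_eq_finite_toFinset_sum _ (Set.toFinite _), ← Finset.sum_filter]
      refine Finset.sum_congr ?_ fun _ _ => rfl
      ext C
      simp only [Finset.mem_filter, Finset.mem_univ, true_and, Set.Finite.mem_toFinset,
        Set.mem_Ici]
      rw [← Subtype.coe_le_coe, Subgroup.zpowers_le]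
    simp [e2]
  let A := Σ C : P, Fin (Nat.card C.1 * (-m C).toNat)
  let B := Σ C : P, Fin (Nat.card C.1 * (m C).toNat)
  let HX : Fin (Nat.card G) ⊕ A → Subgroup G := Sum.elim (fun _ => ⊤) (fun a => a.1.1)
  let HY : B → Subgroup G := fun b => b.1.1
  let _ : Fintype (Σ i, G ⧸ HX i) := Fintype.ofFinite _
  let _ : Fintype (Σ i, G ⧸ HY i) := Fintype.ofFinite _
  obtain ⟨e, he⟩ := h (Σ i, G ⧸ HX i) (Σ i, G ⧸ HY i) (by
    intro g
    rw [card_fixed_sigma, card_fixed_sigma, Fintype.sum_sum_type]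
    let F : Subgroup G → ℕ := fun K => Nat.card (fixedBy (G ⧸ K) g)
    have t : F ⊤ = 1 := by
      have := card_fixed_quot G ⊤ g
      rw [Subgroup.card_top] at this
      rw [Nat.card_congr (Equiv.subtypeUnivEquiv
        fun x => Subgroup.mem_top (x⁻¹ * g * x))] at this
      exact Nat.eq_of_mul_eq_mul_left Nat.card_pos (this.trans (mul_one _).symm)
    have k : ∑ C : P, m C * (Nat.card C.1 * F C.1 : ℤ) = Nat.card G := key g
    change (∑ _i : Fin (Nat.card G), F ⊤) + ∑ a : A, F a.1.1 = ∑ b : B, F b.1.1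
    clear_value F
    simp only [t, A, B, Fintype.sum_sigma, Finset.sum_const,
      Finset.card_univ, Fintype.card_fin, smul_eq_mul, mul_one]
    zify
    rw [← k, ← Finset.sum_add_distrib]
    refine Finset.sum_congr rfl fun C _ => ?_
    have : m C = ((m C).toNat : ℤ) - ((-m C).toNat : ℤ) := by omega
    generalize (m C).toNat = a at *
    generalize (-m C).toNat = b at *
    rw [this]
    ring)
  let x0 : Σ i, G ⧸ HX i := ⟨Sum.inl ⟨0, Nat.card_pos⟩, ((1 : G) : G ⧸ (⊤ : Subgroup G))⟩
  have hx0 : ∀ g : G, g • x0 = x0 := by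
    intro g
    refine congrArg (Sigma.mk _) ?_
    change ((g * 1 : G) : G ⧸ (⊤ : Subgroup G)) = ((1 : G) : G ⧸ (⊤ : Subgroup G))
    rw [QuotientGroup.eq]
    trivial
  have hy : ∀ g : G, g • e x0 = e x0 := fun g => by rw [← he, hx0]
  generalize e x0 = y at hy
  obtain ⟨b, q⟩ := y
  obtain ⟨a, rfl⟩ := QuotientGroup.mk_surjective q
  have ht : b.1.1 = ⊤ := by
    rw [Subgroup.eq_top_iff']
    intro k
    have h1 := hy (a * k⁻¹ * a⁻¹)
    have h2 : (⟨b, ((a * k⁻¹ * a⁻¹ * a : G) : G ⧸ HY b)⟩ : Σ i, G ⧸ HY i) = ⟨b, (a : G ⧸ HY b)⟩ := h1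
    rw [Sigma.mk.injEq] at h2
    have h3 := eq_of_heq h2.2
    rw [QuotientGroup.eq] at h3
    simpa [mul_assoc] using h3
  have hc : IsCyclic b.1.1 := b.1.2
  rw [ht] at hc
  exact isCyclic_of_surjective (Subgroup.topEquiv (G := G)) (Subgroup.topEquiv (G := G)).surjective

/-- A finite group `G` is cyclic iff any two linearly equivalent finite `G`-sets
(same number of fixed points for every `g : G`) are isomorphic as `G`-sets
(there is a `G`-equivariant bijection between them). -/
theorem cyclic_iff_linEquiv_imp_iso (G : Type) [Group G] [Fintype G] :
    IsCyclic G ↔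
      ∀ (X Y : Type) [Fintype X] [Fintype Y] [MulAction G X] [MulAction G Y],
        (∀ g : G, Nat.card (fixedBy X g) = Nat.card (fixedBy Y g)) →
        ∃ e : X ≃ Y, ∀ (g : G) (x : X), e (g • x) = g • e x := by
  constructor
  · intro hc X Y _ _ _ _ h
    exact cyc_dir G _ X Y rfl h
  · exact noncyc_dir G
end

section
/- If G is a finite cyclic group, then any two linearly equivalent finite G-sets are isomorphic: if finite G-sets X and Y satisfy that every g ∈ G has the same number of fixed points on X as on Y, then there exists a G-equivariant bijection between X and Y. -/
open MulAction

namespace LinEq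

theorem smul_mem_orbit_iff {G : Type} [Group G] {X : Type} [MulAction G X] {x z : X} {a : G} :
    a • z ∈ orbit G x ↔ z ∈ orbit G x := by
  constructor
  · intro h
    have := mapsTo_smul_orbit a⁻¹ x h
    simpa using this
  · intro h
    exact mapsTo_smul_orbit a x h

/-- complement of an orbit -/
def compl (G : Type) [Group G] {X : Type} [MulAction G X] (x : X) : SubMulAction G X where
  carrier := (orbit G x)ᶜ
  smul_mem' := by
    intro g z hz hz'
    exact hz ((smul_mem_orbit_iff (a := g)).1 hz')

theorem mem_compl {G : Type} [Group G] {X : Type} [MulAction G X] (x z : X) :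
    z ∈ compl G x ↔ z ∉ orbit G x := Iff.rfl

theorem card_split (G : Type) [Group G] {X : Type} [Fintype X] [MulAction G X] (x : X) (g : G) :
    Nat.card (fixedBy X g) =
      Nat.card (fixedBy (orbit G x) g) + Nat.card (fixedBy (compl G x) g) := by
  classical
  rw [← Nat.card_sum]
  refine Nat.card_congr (Equiv.symm (Equiv.ofBijective
    (Sum.elim (fun z => ⟨z.1.1, congrArg Subtype.val z.2⟩)
      (fun z => ⟨z.1.1, congrArg Subtype.val z.2⟩)) ⟨?_, ?_⟩))
  · rintro (⟨⟨a, ha⟩, ha'⟩ | ⟨⟨a, ha⟩, ha'⟩) (⟨⟨b, hb⟩, hb'⟩ | ⟨⟨b, hb⟩, hb'⟩) hab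
    · obtain rfl : a = b := congrArg Subtype.val hab
      rfl
    · obtain rfl : a = b := congrArg Subtype.val hab
      exact absurd ha hb
    · obtain rfl : a = b := congrArg Subtype.val hab
      exact absurd hb ha
    · obtain rfl : a = b := congrArg Subtype.val hab
      rfl
  · rintro ⟨z, hz⟩
    by_cases hm : z ∈ orbit G x
    · exact ⟨Sum.inl ⟨⟨z, hm⟩, Subtype.ext hz⟩, rfl⟩
    · exact ⟨Sum.inr ⟨⟨z, hm⟩, Subtype.ext hz⟩, rfl⟩

theorem orbit_equiv (G : Type) [Group G] {X Y : Type} [MulAction G X] [MulAction G Y]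
    (x : X) (y : Y) (h : stabilizer G x = stabilizer G y) :
    ∃ a : orbit G x ≃ orbit G y, ∀ (g : G) (z : orbit G x), a (g • z) = g • a z := by
  have key : ∀ g k : G, g • x = k • x ↔ g • y = k • y := by
    intro g k
    have e1 : g • x = k • x ↔ k⁻¹ * g ∈ stabilizer G x := by
      rw [mem_stabilizer_iff, mul_smul, inv_smul_eq_iff]
    have e2 : g • y = k • y ↔ k⁻¹ * g ∈ stabilizer G y := by
      rw [mem_stabilizer_iff, mul_smul, inv_smul_eq_iff]
    rw [e1, e2, h]
  choose c hc using fun z : orbit G x => z.2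
  have hc' : ∀ z : orbit G x, c z • x = z.1 := hc
  refine ⟨Equiv.ofBijective (fun z => ⟨c z • y, c z, rfl⟩) ⟨?_, ?_⟩, ?_⟩
  · intro z w hzw
    have := (key _ _).2 (congrArg Subtype.val hzw)
    rw [hc', hc'] at this
    exact Subtype.ext this
  · rintro ⟨_, g, rfl⟩
    refine ⟨⟨g • x, g, rfl⟩, Subtype.ext ?_⟩
    exact (key _ _).1 (hc' _)
  · intro g z
    apply Subtype.ext
    change c (g • z) • y = g • c z • y
    rw [← mul_smul]
    apply (key _ _).1
    rw [hc', mul_smul, hc']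
    rfl

theorem fixed_card_of_equiv {G : Type} [Group G] {A B : Type} [MulAction G A] [MulAction G B]
    (a : A ≃ B) (ha : ∀ (g : G) (z : A), a (g • z) = g • a z) (g : G) :
    Nat.card (fixedBy A g) = Nat.card (fixedBy B g) := by
  refine Nat.card_congr (a.subtypeEquiv ?_)
  intro z
  change g • z = z ↔ g • a z = a z
  rw [← ha, a.apply_eq_iff_eq]

theorem exists_le {G : Type} [Group G] (hG : IsCyclic G)
    {X Y : Type} [Fintype X] [Fintype Y] [MulAction G X] [MulAction G Y]
    (h : ∀ g : G, Nat.card (fixedBy X g) = Nat.card (fixedBy Y g)) (x : X) :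
    ∃ y : Y, stabilizer G x ≤ stabilizer G y := by
  obtain ⟨g, hg⟩ := (Subgroup.isCyclic_iff_exists_zpowers_eq_top _).1
    (inferInstance : IsCyclic (stabilizer G x))
  have hgx : g ∈ stabilizer G x := hg ▸ Subgroup.mem_zpowers g
  have : Nonempty (fixedBy X g) := ⟨⟨x, hgx⟩⟩
  have : 0 < Nat.card (fixedBy Y g) := h g ▸ Nat.card_pos
  obtain ⟨⟨y, hy⟩⟩ := (Nat.card_pos_iff.1 this).1
  refine ⟨y, ?_⟩
  rw [← hg, Subgroup.zpowers_le]
  exact hy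

theorem main (G : Type) [Group G] [Fintype G] (hG : IsCyclic G) (n : ℕ) :
    ∀ (X Y : Type) [Fintype X] [Fintype Y] [MulAction G X] [MulAction G Y]
    (_ : Nat.card X = n)
    (_ : ∀ g : G, Nat.card (fixedBy X g) = Nat.card (fixedBy Y g)),
    ∃ e : X ≃ Y, ∀ (g : G) (x : X), e (g • x) = g • e x := by
  classical
  induction n using Nat.strong_induction_on with
  | _ n ih =>
  intro X Y _ _ _ _ hn h
  rcases isEmpty_or_nonempty X with hX | hX
  · have hY : IsEmpty Y := by
      constructor
      intro y
      obtain ⟨x, _⟩ := exists_le hG (fun g => (h g).symm) y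
      exact hX.elim x
    exact ⟨Equiv.equivOfIsEmpty X Y, fun g x => hX.elim x⟩
  · obtain ⟨x, hx⟩ := Finite.exists_max (fun x : X => Nat.card (stabilizer G x))
    obtain ⟨y, hy⟩ := exists_le hG h x
    obtain ⟨x', hx'⟩ := exists_le hG (fun g => (h g).symm) y
    have hs : stabilizer G x = stabilizer G y := by
      have : stabilizer G x = stabilizer G x' :=
        Subgroup.eq_of_le_of_card_ge (hy.trans hx') (hx x')
      exact le_antisymm hy (this ▸ hx')
    obtain ⟨a, ha⟩ := orbit_equiv G x y hs
    have hlt : Nat.card (compl G x) < n := by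
      rw [← hn]
      exact Finite.card_subtype_lt (p := fun z => z ∈ compl G x) (x := x)
        (fun hh => hh (mem_orbit_self x))
    have : Fintype (compl G x) := Fintype.ofFinite _
    have : Fintype (compl G y) := Fintype.ofFinite _
    obtain ⟨b, hb⟩ := ih _ hlt (compl G x) (compl G y) rfl (by
      intro g
      have h1 := card_split G x g
      have h2 := card_split G y g
      have h3 := fixed_card_of_equiv a ha g
      have h4 := h g
      omega)
    let f : X → Y := fun z => if hz : z ∈ orbit G x then (a ⟨z, hz⟩).1 else (b ⟨z, hz⟩).1
    have f1 : ∀ z (hz : z ∈ orbit G x), f z = (a ⟨z, hz⟩).1 := fun z hz => dif_pos hz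
    have f2 : ∀ z (hz : z ∉ orbit G x), f z = (b ⟨z, hz⟩).1 := fun z hz => dif_neg hz
    refine ⟨Equiv.ofBijective f ⟨?_, ?_⟩, ?_⟩
    · intro z w hzw
      by_cases hz : z ∈ orbit G x <;> by_cases hw : w ∈ orbit G x
      · rw [f1 z hz, f1 w hw] at hzw
        exact congrArg Subtype.val (a.injective (Subtype.ext hzw))
      · rw [f1 z hz, f2 w hw] at hzw
        exact absurd (hzw ▸ (a ⟨z, hz⟩).2) (b ⟨w, hw⟩).2
      · rw [f2 z hz, f1 w hw] at hzw
        exact absurd (hzw ▸ (a ⟨w, hw⟩).2) (b ⟨z, hz⟩).2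
      · rw [f2 z hz, f2 w hw] at hzw
        exact congrArg Subtype.val (b.injective (Subtype.ext hzw))
    · intro w
      by_cases hw : w ∈ orbit G y
      · refine ⟨(a.symm ⟨w, hw⟩).1, ?_⟩
        rw [f1 _ (a.symm ⟨w, hw⟩).2]
        simp
      · refine ⟨(b.symm ⟨w, hw⟩).1, ?_⟩
        rw [f2 _ (b.symm ⟨w, hw⟩).2]
        simp
    · intro g z
      change f (g • z) = g • f z
      by_cases hz : z ∈ orbit G x
      · have hz' : g • z ∈ orbit G x := smul_mem_orbit_iff.2 hz
        rw [f1 _ hz, f1 _ hz']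
        exact congrArg Subtype.val (ha g ⟨z, hz⟩)
      · have hz' : g • z ∉ orbit G x := fun hh => hz (smul_mem_orbit_iff.1 hh)
        rw [f2 _ hz, f2 _ hz']
        exact congrArg Subtype.val (hb g ⟨z, hz⟩)

end LinEq

/-- For a finite cyclic group `G`, any two linearly equivalent finite `G`-sets are
isomorphic: if every `g : G` has the same number of fixed points on `X` as on `Y`,
then there is a `G`-equivariant bijection between `X` and `Y`. -/
theorem linEquiv_imp_iso_of_cyclic (G : Type) [Group G] [Fintype G] (hG : IsCyclic G)
    (X Y : Type) [Fintype X] [Fintype Y] [MulAction G X] [MulAction G Y]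
    (h : ∀ g : G, Nat.card (fixedBy X g) = Nat.card (fixedBy Y g)) :
    ∃ e : X ≃ Y, ∀ (g : G) (x : X), e (g • x) = g • e x := by
  exact LinEq.main G hG _ X Y rfl h
end

section
/- Let G be a finite group and let X and Y be linearly equivalent finite G-sets. If the action of G on X is transitive (X is nonempty and has a single orbit), then the action of G on Y is also transitive and |Y| = |X|. In particular, there is no unbalanced pair of G-sets in which one of the sets is transitive. -/
open MulAction

theorem burnside_aux (G X : Type) [Group G] [Fintype G] [Fintype X] [MulAction G X] :
    ∑ g : G, Nat.card (fixedBy X g) = Nat.card (orbitRel.Quotient G X) * Nat.card G := by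
  classical
  have := Fintype.ofFinite (orbitRel.Quotient G X)
  have h := sum_card_fixedBy_eq_card_orbits_mul_card_group G X
  simp only [Nat.card_eq_fintype_card]
  exact h

theorem orbitCount_aux (G X : Type) [Group G] [MulAction G X] [Nonempty X]
    [IsPretransitive G X] (n : ℕ) :
    orbitCountOfSize G X n = Nat.card {_u : Unit // Nat.card X = n} := by
  unfold orbitCountOfSize
  have hs : Subsingleton (orbitRel.Quotient G X) :=
    (pretransitive_iff_subsingleton_quotient G X).1 inferInstance
  have ho : ∀ o : orbitRel.Quotient G X, Nat.card o.orbit = Nat.card X := by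
    intro o
    induction o using Quotient.inductionOn' with
    | h x =>
      rw [orbitRel.Quotient.orbit_mk, orbit_eq_univ, Nat.card_univ]
  obtain ⟨x⟩ := ‹Nonempty X›
  refine Nat.card_congr ⟨fun o => ⟨(), (ho o.1).symm.trans o.2⟩,
    fun u => ⟨Quotient.mk'' x, (ho _).trans u.2⟩, fun o => ?_, fun u => ?_⟩
  · exact Subtype.ext (Subsingleton.elim _ _)
  · exact Subsingleton.elim _ _

/-- If `X` and `Y` are linearly equivalent finite `G`-sets and `X` is transitive (nonempty
with a single orbit), then `Y` is transitive as well and `|Y| = |X|`; in particular the pair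
is not unbalanced: for every `n` the number of orbits of cardinality `n` is the same in `X`
and in `Y`. -/
theorem linEquiv_of_transitive
    (G X Y : Type) [Group G] [Fintype G] [Fintype X] [Fintype Y]
    [MulAction G X] [MulAction G Y]
    (h : ∀ g : G, Nat.card (fixedBy X g) = Nat.card (fixedBy Y g))
    (hX : Nonempty X ∧ IsPretransitive G X) :
    IsPretransitive G Y ∧ Nat.card Y = Nat.card X ∧
      ∀ n : ℕ, orbitCountOfSize G X n = orbitCountOfSize G Y n := by
  obtain ⟨hne, hT⟩ := hX
  have hc : Nat.card Y = Nat.card X := by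
    have h1 := h 1
    simpa [fixedBy_one_eq_univ] using h1.symm
  have hXY : Nat.card (orbitRel.Quotient G X) = Nat.card (orbitRel.Quotient G Y) := by
    have h1 := burnside_aux G X
    have h2 := burnside_aux G Y
    rw [Finset.sum_congr rfl (fun g _ => h g), h2] at h1
    exact (Nat.eq_of_mul_eq_mul_right Nat.card_pos h1).symm
  have hs : Subsingleton (orbitRel.Quotient G X) :=
    (pretransitive_iff_subsingleton_quotient G X).1 hT
  have hTY : IsPretransitive G Y := by
    rw [pretransitive_iff_subsingleton_quotient, ← Finite.card_le_one_iff_subsingleton, ← hXY,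
      Finite.card_le_one_iff_subsingleton]
    exact hs
  have hneY : Nonempty Y := by
    have : 0 < Nat.card Y := hc ▸ Nat.card_pos
    exact (Nat.card_pos_iff.1 this).1
  refine ⟨hTY, hc, fun n => ?_⟩
  rw [orbitCount_aux, orbitCount_aux, hc]
end

section
/- Let G be a finite group, H a subgroup of G, and let X and Y be finite H-sets such that for every h ∈ H the number of fixed points of h on X equals the number of fixed points of h on Y. Then for every g ∈ G, the number of fixed points of g on the induced G-set G ×_H X equals the number of fixed points of g on the induced G-set G ×_H Y. That is, linear equivalence of H-sets is preserved by induction to G. -/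
open MulAction

/-- The setoid on `G × X` whose classes are the orbits of the `H`-action
`h • (g, x) = (g * h⁻¹, h • x)`, where `H ≤ G` and `X` is an `H`-set.  Its quotient is the
induced `G`-set `G ×_H X`. -/
def indSetoid (G : Type) [Group G] (H : Subgroup G) (X : Type) [MulAction H X] :
    Setoid (G × X) where
  r p q := ∃ h : H, q = (p.1 * (h : G)⁻¹, h • p.2)
  iseqv := by
    constructor
    · intro p
      exact ⟨1, by simp⟩
    · rintro p q ⟨h, rfl⟩
      exact ⟨h⁻¹, by simp [mul_assoc, mul_smul]⟩
    · rintro p q r ⟨h₁, rfl⟩ ⟨h₂, rfl⟩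
      exact ⟨h₂ * h₁, by simp [mul_assoc, mul_smul]⟩

/-- The induced `G`-set `G ×_H X`: the quotient of `G × X` by the `H`-action
`h • (g, x) = (g * h⁻¹, h • x)`. -/
def IndGSet (G : Type) [Group G] (H : Subgroup G) (X : Type) [MulAction H X] : Type :=
  Quotient (indSetoid G H X)

/-- `G` acts on the induced `G`-set `G ×_H X` by `g' • ⟦(g, x)⟧ = ⟦(g' * g, x)⟧`. -/
instance IndGSet.mulAction (G : Type) [Group G] (H : Subgroup G) (X : Type) [MulAction H X] :
    MulAction G (IndGSet G H X) where
  smul g' := Quotient.lift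
    (fun p => Quotient.mk (indSetoid G H X) (g' * p.1, p.2))
    (by
      rintro p q ⟨h, rfl⟩
      exact Quotient.sound ⟨h, by simp [mul_assoc]⟩)
  one_smul := by
    refine Quotient.ind (fun p => ?_)
    exact Quotient.sound ⟨1, by simp⟩
  mul_smul g₁ g₂ := by
    refine Quotient.ind (fun p => ?_)
    exact Quotient.sound ⟨1, by simp [mul_assoc]⟩

def indMk {G : Type} [Group G] (H : Subgroup G) {X : Type} [MulAction H X] (t : G) (x : X) :
    IndGSet G H X := Quotient.mk (indSetoid G H X) (t, x)

theorem ind_mk_eq {G : Type} [Group G] {H : Subgroup G} {X : Type} [MulAction H X]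
    {p q : G × X} : (Quotient.mk (indSetoid G H X) p = Quotient.mk (indSetoid G H X) q) ↔
      ∃ h : H, q = (p.1 * (h : G)⁻¹, h • p.2) := Quotient.eq

theorem ind_fixed_iff {G : Type} [Group G] {H : Subgroup G} {X : Type} [MulAction H X]
    (g t : G) (x : X) :
    (g • indMk H t x =
      indMk H t x) ↔
      ∃ hm : t⁻¹ * g * t ∈ H, (⟨t⁻¹ * g * t, hm⟩ : H) • x = x := by
  refine Iff.trans (ind_mk_eq (p := (g * t, x)) (q := (t, x))) ?_
  constructor
  · rintro ⟨k, hk⟩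
    obtain ⟨h1, h2⟩ := Prod.mk.inj hk
    have e : t⁻¹ * g * t = k := by
      have : t * (k : G) = g * t := by
        conv_lhs => rw [h1]
        simp
      rw [mul_assoc, ← this]; simp
    have hm : t⁻¹ * g * t ∈ H := e ▸ k.2
    refine ⟨hm, ?_⟩
    have : (⟨t⁻¹ * g * t, hm⟩ : H) = k := Subtype.ext e
    rw [this]; exact h2.symm
  · rintro ⟨hm, hx⟩
    exact ⟨⟨_, hm⟩, Prod.ext (by simp [mul_assoc]) hx.symm⟩

theorem ind_card {G : Type} [Group G] (H : Subgroup G) (X : Type) [MulAction H X] (g : G) :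
    Nat.card (fixedBy (IndGSet G H X) g) =
    Nat.card (Σ c : {c : G ⧸ H // c.out⁻¹ * g * c.out ∈ H},
      fixedBy X (⟨c.1.out⁻¹ * g * c.1.out, c.2⟩ : H)) := by
  symm
  refine Nat.card_congr (Equiv.ofBijective
    (fun p => ⟨indMk H p.1.1.out p.2.1,
      (ind_fixed_iff g _ _).2 ⟨p.1.2, p.2.2⟩⟩) ⟨?_, ?_⟩)
  · rintro ⟨⟨c, hc⟩, ⟨x, hx⟩⟩ ⟨⟨d, hd⟩, ⟨y, hy⟩⟩ heq
    obtain ⟨k, hk⟩ := ind_mk_eq.1 (congrArg Subtype.val heq)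
    obtain ⟨h1, h2⟩ := Prod.mk.inj hk
    dsimp only at h1 h2
    have hcd : c = d := by
      rw [← QuotientGroup.out_eq' c, ← QuotientGroup.out_eq' d, QuotientGroup.eq, h1]
      simp
    subst hcd
    have hk1 : k = 1 := by
      apply Subtype.ext
      simpa using h1
    subst hk1
    rw [one_smul] at h2
    subst h2
    rfl
  · rintro ⟨z, hz⟩
    induction z using Quotient.ind with
    | _ p =>
    obtain ⟨a, x⟩ := p
    obtain ⟨k, hk⟩ := QuotientGroup.mk_out_eq_mul H a
    have e : indMk H a x = indMk H (a : G ⧸ H).out (k⁻¹ • x) :=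
      ind_mk_eq.2 ⟨k⁻¹, by simp [hk]⟩
    have hz' : g • indMk H a x = indMk H a x := hz
    rw [e] at hz'
    obtain ⟨hm, hx⟩ := (ind_fixed_iff g _ _).1 hz'
    exact ⟨⟨⟨(a : G ⧸ H), hm⟩, ⟨k⁻¹ • x, hx⟩⟩, Subtype.ext e.symm⟩

/-- Linear equivalence of `H`-sets is preserved by induction to `G`: if every `h ∈ H` has
the same number of fixed points on the `H`-sets `X` and `Y`, then every `g ∈ G` has the
same number of fixed points on the induced `G`-sets `G ×_H X` and `G ×_H Y`. -/
theorem linEquiv_of_induced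
    (G : Type) [Group G] [Fintype G] (H : Subgroup G) (X Y : Type)
    [Fintype X] [Fintype Y] [MulAction H X] [MulAction H Y]
    (h : ∀ h : H, Nat.card (fixedBy X h) = Nat.card (fixedBy Y h)) :
    ∀ g : G, Nat.card (fixedBy (IndGSet G H X) g) = Nat.card (fixedBy (IndGSet G H Y) g) := by
  intro g
  rw [ind_card, ind_card]
  exact Nat.card_congr (Equiv.sigmaCongrRight fun c => (Finite.card_eq.1 (h _)).some)
end

section
/- Let G and H be finite groups and suppose H is involved in G, i.e. there exist subgroups L ⊴ K ≤ G with K/L isomorphic to H. If H admits an unbalanced pair of H-sets, then G admits an unbalanced pair of G-sets. -/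
open MulAction

section Induction

variable {G H : Type} [Group G] [Group H] {K : Subgroup G}

/-- The cocycle of the section `Quotient.out` of `G → G ⧸ K`. -/
noncomputable def indCocycle (K : Subgroup G) (g : G) (c : G ⧸ K) : K :=
  ⟨(g • c).out⁻¹ * (g * c.out), by
    rw [← QuotientGroup.eq, QuotientGroup.out_eq', ← smul_eq_mul, ← MulAction.Quotient.smul_coe,
      QuotientGroup.out_eq']⟩

/-- The induced `G`-set, realised on `(G ⧸ K) × X`. -/
@[reducible]
noncomputable def indAction (f : K →* H) (X : Type) [MulAction H X] :
    MulAction G ((G ⧸ K) × X) where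
  smul g p := (g • p.1, f (indCocycle K g p.1) • p.2)
  one_smul p := by
    change ((1 : G) • p.1, f (indCocycle K 1 p.1) • p.2) = p
    have : indCocycle K 1 p.1 = 1 := by
      apply Subtype.ext
      simp [indCocycle]
    rw [this]; simp
  mul_smul g h p := by
    change ((g * h) • p.1, f (indCocycle K (g * h) p.1) • p.2) =
      (g • h • p.1, f (indCocycle K g (h • p.1)) • f (indCocycle K h p.1) • p.2)
    have : indCocycle K (g * h) p.1 = indCocycle K g (h • p.1) * indCocycle K h p.1 := by
      apply Subtype.ext
      simp [indCocycle, mul_smul, mul_assoc]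
    rw [this, map_mul, mul_smul, mul_smul]

theorem ind_fixed [Finite G] (f : K →* H) (X : Type) [Finite X] [MulAction H X] (g : G) :
    letI := indAction f X
    Nat.card (fixedBy ((G ⧸ K) × X) g) =
      ∑ᶠ c : {c : G ⧸ K // g • c = c}, Nat.card (fixedBy X (f (indCocycle K g c.1))) := by
  letI := indAction f X
  have : Fintype {c : G ⧸ K // g • c = c} := Fintype.ofFinite _
  rw [finsum_eq_sum_of_fintype, ← Nat.card_sigma]
  refine Nat.card_congr
    { toFun := fun p => ⟨⟨p.1.1, congrArg Prod.fst p.2⟩, ⟨p.1.2, congrArg Prod.snd p.2⟩⟩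
      invFun := fun q => ⟨(q.1.1, q.2.1), Prod.ext q.1.2 q.2.2⟩
      left_inv := fun p => rfl
      right_inv := fun q => rfl }

theorem ind_mem_orbit (f : K →* H) (hf : Function.Surjective f) (X : Type) [MulAction H X]
    (p q : (G ⧸ K) × X) :
    letI := indAction f X
    p ∈ orbit G q ↔ p.2 ∈ orbit H q.2 := by
  letI := indAction f X
  constructor
  · rintro ⟨g, rfl⟩
    exact ⟨_, rfl⟩
  · rintro ⟨h, hh⟩
    obtain ⟨k, rfl⟩ := hf h
    have h1 : (p.1.out * k * q.1.out⁻¹) • q.1 = p.1 := by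
      conv_lhs => rw [← QuotientGroup.out_eq' q.1]
      rw [MulAction.Quotient.smul_coe]
      simp only [QuotientGroup.out_eq', smul_eq_mul, inv_mul_cancel_right]
      conv_rhs => rw [← QuotientGroup.out_eq' p.1]
      rw [QuotientGroup.eq]
      simp
    refine ⟨p.1.out * k * q.1.out⁻¹, Prod.ext h1 ?_⟩
    change f (indCocycle K _ q.1) • q.2 = p.2
    have : indCocycle K (p.1.out * k * q.1.out⁻¹) q.1 = k := by
      apply Subtype.ext
      simp only [indCocycle, h1]
      group
    rw [this]; exact hh

theorem ind_count [Finite G] (f : K →* H) (hf : Function.Surjective f) (X : Type)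
    [MulAction H X] (n : ℕ) :
    letI := indAction f X
    orbitCountOfSize G ((G ⧸ K) × X) (Nat.card (G ⧸ K) * n) = orbitCountOfSize H X n := by
  letI := indAction f X
  let F : orbitRel.Quotient G ((G ⧸ K) × X) → orbitRel.Quotient H X :=
    Quotient.map Prod.snd (fun p q h => (ind_mem_orbit f hf X p q).1 h)
  have hF : Function.Bijective F := by
    constructor
    · intro a b
      induction a using Quotient.inductionOn
      induction b using Quotient.inductionOn
      intro h
      exact Quotient.sound ((ind_mem_orbit f hf X _ _).2 (Quotient.exact h))
    · intro a
      induction a using Quotient.inductionOn with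
      | h x => exact ⟨Quotient.mk _ ((1 : G), x), rfl⟩
  refine Nat.card_congr ((Equiv.ofBijective F hF).subtypeEquiv ?_)
  intro a
  induction a using Quotient.inductionOn with
  | h p =>
    change Nat.card (orbit G p) = _ ↔ Nat.card (orbit H p.2) = n
    have : orbit G p = Set.univ ×ˢ orbit H p.2 := by
      ext q
      simp [ind_mem_orbit f hf X q p]
    rw [this, Nat.card_congr (Equiv.Set.prod _ _), Nat.card_prod, Nat.card_univ]
    exact Nat.mul_right_inj Nat.card_pos.ne'

end Induction

/-- If a finite group `H` is involved in a finite group `G` (i.e. `H ≅ K ⧸ L` for some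
subgroups `L ⊴ K ≤ G`) and `H` admits an unbalanced pair of `H`-sets, then `G` admits an
unbalanced pair of `G`-sets. -/
theorem unbalanced_pair_of_involved
    (G H : Type) [Group G] [Group H] [Fintype G] [Fintype H]
    (K : Subgroup G) (L : Subgroup K) [L.Normal] (φ : (K ⧸ L) ≃* H)
    (hH : ∃ (X Y : Type) (_ : Fintype X) (_ : Fintype Y)
        (ix : MulAction H X) (iy : MulAction H Y), @IsUnbalancedPair H _ X Y ix iy) :
    ∃ (X Y : Type) (_ : Fintype X) (_ : Fintype Y)
      (ix : MulAction G X) (iy : MulAction G Y), @IsUnbalancedPair G _ X Y ix iy := by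
  classical
  obtain ⟨X, Y, _, _, ix, iy, hl, n, hn⟩ := hH
  let f : K →* H := φ.toMonoidHom.comp (QuotientGroup.mk' L)
  have hf : Function.Surjective f := φ.surjective.comp (QuotientGroup.mk'_surjective L)
  refine ⟨(G ⧸ K) × X, (G ⧸ K) × Y, Fintype.ofFinite _, Fintype.ofFinite _,
    indAction f X, indAction f Y, ?_, Nat.card (G ⧸ K) * n, ?_⟩
  · intro g
    rw [ind_fixed f X g, ind_fixed f Y g]
    exact finsum_congr fun c => hl _
  · rw [ind_count f hf X n, ind_count f hf Y n]
    exact hn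
end

section
/- Let p be a prime and G = (ℤ/pℤ) × (ℤ/pℤ). Then for every g ∈ G, the sum over all subgroups H of G of cardinality p of the number of fixed points of g on the coset space G/H equals p(p+1) if g is the identity and equals p otherwise. Consequently, the disjoint union of the coset spaces G/H over the p+1 subgroups H of order p is linearly equivalent to the disjoint union of p one-point G-sets and one copy of G with its regular action, and these two G-sets form an unbalanced pair. -/
open MulAction

lemma aux_fixed {G : Type} [CommGroup G] (H : Subgroup G) (g : G) [Decidable (g ∈ H)] :
    Nat.card (fixedBy (G ⧸ H) g) = if g ∈ H then H.index else 0 := by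
  have key : ∀ q : G ⧸ H, q ∈ fixedBy (G ⧸ H) g ↔ g ∈ H := by
    intro q
    induction q using QuotientGroup.induction_on with
    | H x =>
      rw [mem_fixedBy, MulAction.Quotient.smul_coe, smul_eq_mul, mul_comm, eq_comm,
        QuotientGroup.eq]
      simp
  split_ifs with h
  · have : fixedBy (G ⧸ H) g = Set.univ := by ext q; simp [key q, h]
    rw [this, Nat.card_univ]; rfl
  · have : fixedBy (G ⧸ H) g = ∅ := by ext q; simp only [key q, h, Set.mem_empty_iff_false]
    rw [this]; simp

lemma aux_unique {p : ℕ} [Fact p.Prime] {G : Type} [CommGroup G] [Finite G]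
    (hexp : ∀ g : G, g ^ p = 1) (g : G) (hg : g ≠ 1) (H : Subgroup G) :
    (Nat.card H = p ∧ g ∈ H) ↔ H = Subgroup.zpowers g := by
  have ho : orderOf g = p := orderOf_eq_prime (hexp g) hg
  constructor
  · rintro ⟨h1, h2⟩
    symm
    apply Subgroup.eq_of_le_of_card_ge
    · rwa [Subgroup.zpowers_le]
    · rw [h1, Nat.card_zpowers, ho]
  · rintro rfl
    exact ⟨by rw [Nat.card_zpowers, ho], Subgroup.mem_zpowers g⟩

open Classical in
lemma aux_count {p : ℕ} [Fact p.Prime] {G : Type} [CommGroup G] [Fintype G] [Fintype (Subgroup G)]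
    (hexp : ∀ g : G, g ^ p = 1) (hc : Nat.card G = p ^ 2) :
    (Finset.univ.filter (fun H : Subgroup G => Nat.card H = p)).card = p + 1 := by
  have hp := (Fact.out : p.Prime).two_le
  have h := Finset.sum_card_bipartiteAbove_eq_sum_card_bipartiteBelow
    (s := Finset.univ.filter (fun H : Subgroup G => Nat.card H = p))
    (t := Finset.univ.filter (fun g : G => g ≠ 1)) (fun H g => g ∈ H)
  have h1 : ∀ H ∈ Finset.univ.filter (fun H : Subgroup G => Nat.card H = p),
      (Finset.bipartiteAbove (fun (H : Subgroup G) g => g ∈ H)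
        (Finset.univ.filter (fun g : G => g ≠ 1)) H).card = p - 1 := by
    intro H hH
    simp only [Finset.mem_filter, Finset.mem_univ, true_and] at hH
    have : Finset.bipartiteAbove (fun (H : Subgroup G) g => g ∈ H)
        (Finset.univ.filter (fun g : G => g ≠ 1)) H
        = (Finset.univ.filter (fun g : G => g ∈ H)).erase 1 := by
      ext g; simp [Finset.bipartiteAbove]
    rw [this, Finset.card_erase_of_mem (by simp [H.one_mem]), ← hH, Nat.card_eq_fintype_card,
      Fintype.card_subtype]
  have h2 : ∀ g ∈ Finset.univ.filter (fun g : G => g ≠ 1),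
      (Finset.bipartiteBelow (fun (H : Subgroup G) g => g ∈ H)
        (Finset.univ.filter (fun H : Subgroup G => Nat.card H = p)) g).card = 1 := by
    intro g hg
    simp only [Finset.mem_filter, Finset.mem_univ, true_and] at hg
    rw [Finset.card_eq_one]
    refine ⟨Subgroup.zpowers g, ?_⟩
    ext H
    simp only [Finset.bipartiteBelow, Finset.mem_filter, Finset.mem_univ, true_and,
      Finset.mem_singleton]
    exact aux_unique hexp g hg H
  rw [Finset.sum_congr rfl h1, Finset.sum_congr rfl h2] at h
  have h3 : (Finset.univ.filter (fun g : G => g ≠ 1)).card = p ^ 2 - 1 := by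
    rw [← hc, Nat.card_eq_fintype_card, Finset.filter_ne', Finset.card_erase_of_mem (by simp),
      Finset.card_univ]
  simp only [Finset.sum_const, smul_eq_mul, mul_one, h3] at h
  have h4 : p ^ 2 - 1 = (p + 1) * (p - 1) := by
    simpa using Nat.sq_sub_sq p 1
  rw [h4] at h
  exact Nat.eq_of_mul_eq_mul_right (by omega) h

lemma aux_sum {p : ℕ} [Fact p.Prime] {G : Type} [CommGroup G] [Fintype G] [Fintype (Subgroup G)]
    [DecidableEq G] [DecidablePred (fun H : Subgroup G => Nat.card H = p)]
    (hexp : ∀ g : G, g ^ p = 1) (hc : Nat.card G = p ^ 2) (g : G) :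
    ∑ H ∈ Finset.univ.filter (fun H : Subgroup G => Nat.card H = p),
      Nat.card (fixedBy (G ⧸ H) g) = if g = 1 then p * (p + 1) else p := by
  classical
  have hp := (Fact.out : p.Prime).pos
  have h1 : ∀ H ∈ Finset.univ.filter (fun H : Subgroup G => Nat.card H = p),
      Nat.card (fixedBy (G ⧸ H) g) = if g ∈ H then p else 0 := by
    intro H hH
    simp only [Finset.mem_filter, Finset.mem_univ, true_and] at hH
    have : H.index = p := by
      have := H.card_mul_index
      rw [hH, hc, sq] at this
      exact Nat.eq_of_mul_eq_mul_left hp this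
    rw [aux_fixed, this]
  rw [Finset.sum_congr rfl h1]
  split_ifs with hg
  · subst hg
    have := aux_count (p := p) hexp hc
    simp only [one_mem, if_true, Finset.sum_const, smul_eq_mul]
    rw [mul_comm]
    congr 1
    convert this
  · rw [← Finset.sum_filter, Finset.filter_filter]
    have : (Finset.univ.filter (fun H : Subgroup G => Nat.card H = p ∧ g ∈ H))
        = {Subgroup.zpowers g} := by
      ext H
      simp only [Finset.mem_filter, Finset.mem_univ, true_and, Finset.mem_singleton]
      exact aux_unique hexp g hg H
    rw [this]; simp

lemma aux_sigma {G ι : Type} [Group G] [Fintype ι] (X : ι → Type) [∀ i, MulAction G (X i)]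
    [∀ i, Finite (X i)] (g : G) :
    Nat.card (fixedBy (Σ i, X i) g) = ∑ i, Nat.card (fixedBy (X i) g) := by
  rw [← Nat.card_sigma]
  apply Nat.card_congr
  exact
    { toFun := fun x => ⟨x.1.1, x.1.2, by
        obtain ⟨⟨i, x⟩, h⟩ := x
        rw [mem_fixedBy, Sigma.smul_mk] at h
        simpa using h⟩
      invFun := fun x => ⟨⟨x.1, x.2.1⟩, by
        obtain ⟨i, x, h⟩ := x
        rw [mem_fixedBy] at h
        rw [mem_fixedBy, Sigma.smul_mk, h]⟩
      left_inv := fun x => rfl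
      right_inv := fun x => rfl }

lemma aux_sumtype {G X Y : Type} [Group G] [MulAction G X] [MulAction G Y] [Finite X] [Finite Y]
    (g : G) :
    Nat.card (fixedBy (X ⊕ Y) g) = Nat.card (fixedBy X g) + Nat.card (fixedBy Y g) := by
  rw [← Nat.card_sum]
  apply Nat.card_congr
  refine (Equiv.subtypeSum (p := fun x => x ∈ fixedBy (X ⊕ Y) g)).trans ?_
  refine Equiv.sumCongr (Equiv.subtypeEquivRight ?_) (Equiv.subtypeEquivRight ?_)
  · intro x; simp [mem_fixedBy]
  · intro x; simp [mem_fixedBy]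

lemma aux_main {p : ℕ} [Fact p.Prime] {G : Type} [CommGroup G] [Fintype G]
    (hexp : ∀ g : G, g ^ p = 1) (hc : Nat.card G = p ^ 2) :
    IsUnbalancedPair G ((H : {H : Subgroup G // Nat.card H = p}) × (G ⧸ H.1))
      (((_ : Fin p) × (G ⧸ (⊤ : Subgroup G))) ⊕ G) := by
  classical
  have hp := (Fact.out : p.Prime).two_le
  constructor
  · intro g
    rw [aux_sumtype, aux_sigma, aux_sigma]
    have h := aux_sum (p := p) hexp hc g
    rw [← Finset.sum_subtype_eq_sum_filter, Finset.subtype_univ] at h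
    rw [h]
    simp only [aux_fixed, Subgroup.mem_top, if_true, Subgroup.index_top, Finset.sum_const,
      Finset.card_univ, Fintype.card_fin, smul_eq_mul, mul_one]
    split_ifs with hg
    · subst hg
      have : fixedBy G (1 : G) = Set.univ := by ext; simp
      rw [this, Nat.card_univ, hc]; ring
    · have : fixedBy G g = ∅ := by ext; simp [hg]
      rw [this]; simp
  · refine ⟨1, ?_⟩
    have h0 : orbitCountOfSize G ((H : {H : Subgroup G // Nat.card H = p}) × (G ⧸ H.1)) 1 = 0 := by
      unfold orbitCountOfSize
      have : IsEmpty {o : orbitRel.Quotient G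
          ((H : {H : Subgroup G // Nat.card H = p}) × (G ⧸ H.1)) // Nat.card o.orbit = 1} := by
        refine ⟨?_⟩
        rintro ⟨o, ho⟩
        induction o using Quotient.inductionOn' with
        | h x =>
        rw [orbitRel.Quotient.orbit_mk] at ho
        obtain ⟨⟨H, hH⟩, q⟩ := x
        have hs := (Nat.card_eq_one_iff_unique.mp ho).1
        have htop : H = ⊤ := by
          rw [eq_top_iff]
          intro g _
          have e : g • (⟨⟨H, hH⟩, q⟩ : (H : {H : Subgroup G // Nat.card H = p}) × (G ⧸ H.1))
              = ⟨⟨H, hH⟩, q⟩ :=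
            congrArg Subtype.val (hs.elim ⟨_, mem_orbit _ g⟩ ⟨_, mem_orbit_self _⟩)
          rw [Sigma.smul_mk] at e
          have e' : g • q = q := by simpa using e
          have hf := aux_fixed H g
          by_contra hg
          rw [if_neg hg, Nat.card_eq_zero] at hf
          rcases hf with hf | hf
          · exact hf.elim ⟨q, e'⟩
          · exact hf.not_finite (Subtype.finite)
        subst htop
        rw [Subgroup.card_top, hc] at hH
        nlinarith
      exact Nat.card_of_isEmpty
    rw [h0]
    symm
    unfold orbitCountOfSize
    rw [Nat.card_ne_zero]
    refine ⟨⟨⟨Quotient.mk'' (Sum.inl ⟨⟨0, by omega⟩, ((1 : G) : G ⧸ (⊤ : Subgroup G))⟩), ?_⟩⟩,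
      inferInstance⟩
    rw [orbitRel.Quotient.orbit_mk, Nat.card_eq_one_iff_unique]
    refine ⟨⟨?_⟩, ⟨⟨_, mem_orbit_self _⟩⟩⟩
    rintro ⟨_, g, rfl⟩ ⟨_, g', rfl⟩
    apply Subtype.ext
    simp only [Sum.smul_inl, Sigma.smul_mk]
    congr 2
    exact QuotientGroup.subsingleton_quotient_top.elim _ _

/-- For `G = (ℤ/pℤ) × (ℤ/pℤ)` with `p` prime: for every `g ∈ G` the sum, over the subgroups
`H` of cardinality `p`, of the number of fixed points of `g` on `G ⧸ H` equals `p(p+1)` if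
`g = 1` and `p` otherwise.  Consequently the disjoint union of the coset spaces `G ⧸ H`
over the `p + 1` subgroups `H` of order `p` and the disjoint union of `p` one-point
`G`-sets (copies of `G ⧸ ⊤`) with one copy of `G` (its regular action) are linearly
equivalent and form an unbalanced pair. -/
theorem zmod_p_sq_unbalanced_pair (p : ℕ) [Fact p.Prime] :
    (∀ g : Multiplicative (ZMod p) × Multiplicative (ZMod p),
        ∑ H ∈ Finset.univ.filter
            (fun H : Subgroup (Multiplicative (ZMod p) × Multiplicative (ZMod p)) => Nat.card H = p),
          Nat.card (fixedBy ((Multiplicative (ZMod p) × Multiplicative (ZMod p)) ⧸ H) g)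
          = if g = 1 then p * (p + 1) else p) ∧
      IsUnbalancedPair (Multiplicative (ZMod p) × Multiplicative (ZMod p))
        ((H : {H : Subgroup (Multiplicative (ZMod p) × Multiplicative (ZMod p)) // Nat.card H = p}) × ((Multiplicative (ZMod p) × Multiplicative (ZMod p)) ⧸ H.1))
        (((_ : Fin p) × ((Multiplicative (ZMod p) × Multiplicative (ZMod p)) ⧸ (⊤ : Subgroup (Multiplicative (ZMod p) × Multiplicative (ZMod p)))))
          ⊕ (Multiplicative (ZMod p) × Multiplicative (ZMod p))) := by
  have hexp : ∀ g : Multiplicative (ZMod p) × Multiplicative (ZMod p), g ^ p = 1 := by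
    have h1 : ∀ x : Multiplicative (ZMod p), x ^ p = 1 := by
      intro x
      apply Multiplicative.toAdd.injective
      simp
    intro g
    ext1
    · simp [h1]
    · simp [h1]
  have hc : Nat.card (Multiplicative (ZMod p) × Multiplicative (ZMod p)) = p ^ 2 := by
    rw [Nat.card_prod]
    have : Nat.card (Multiplicative (ZMod p)) = p := Nat.card_zmod p
    rw [this, sq]
  refine ⟨fun g => ?_, ?_⟩
  · convert aux_sum (p := p) hexp hc g
  · exact aux_main hexp hc
end

section
/- Let p and q be primes and let G be a nonabelian group of order p·q. Then every non-identity element of G generates its own centralizer: for every g ∈ G with g ≠ 1, the centralizer C_G(g) equals the cyclic subgroup generated by g. -/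
/-- In a nonabelian group of order `p * q` (`p`, `q` primes), every non-identity element
generates its own centralizer: `C_G(g) = ⟨g⟩`. -/
theorem centralizer_eq_zpowers_of_nonabelian_pq
    (p q : ℕ) (hp : p.Prime) (hq : q.Prime)
    (G : Type) [Group G] [Fintype G] (hG : Fintype.card G = p * q)
    (hnab : ¬ ∀ a b : G, a * b = b * a) (g : G) (hg : g ≠ 1) :
    Subgroup.centralizer {g} = Subgroup.zpowers g := by
  have hle : Subgroup.zpowers g ≤ Subgroup.centralizer {g} := by
    rw [Subgroup.zpowers_le, Subgroup.mem_centralizer_iff]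
    simp
  refine le_antisymm ?_ hle
  have hmul := (Subgroup.zpowers g).card_mul_index
  have ha : Nat.card (Subgroup.zpowers g) ≠ 1 := by
    rw [Nat.card_zpowers]
    simpa using hg
  rw [Nat.card_eq_fintype_card (α := G), hG] at hmul
  have hk : (Subgroup.zpowers g).index = 1 ∨ (Subgroup.zpowers g).index.Prime := by
    generalize (Subgroup.zpowers g).index = k at *
    generalize Nat.card (Subgroup.zpowers g) = a at *
    rcases (Nat.Prime.dvd_mul hp).1 (Dvd.intro _ hmul.symm) with ⟨b, rfl⟩ | ⟨b, rfl⟩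
    · have h : b * k = q := Nat.eq_of_mul_eq_mul_left hp.pos (by linarith)
      rcases hq.eq_one_or_self_of_dvd k (Dvd.intro_left _ h) with h1 | h1
      · exact Or.inl h1
      · exact Or.inr (h1 ▸ hq)
    · have h : a * b = q := Nat.eq_of_mul_eq_mul_left hp.pos (by linarith)
      have h2 : a = q := (hq.eq_one_or_self_of_dvd a (Dvd.intro _ h)).resolve_left ha
      have h3 : b = 1 := by
        subst h2
        exact Nat.eq_of_mul_eq_mul_left hq.pos (by linarith)
      subst h3
      exact Or.inr (by simpa using hp)
  rcases hk with hk | hk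
  · rw [Subgroup.index_eq_one.1 hk]
    exact le_top
  have hrel := Subgroup.relIndex_mul_index hle
  rcases hk.eq_one_or_self_of_dvd _ (Dvd.intro _ hrel) with h | h
  · exact Subgroup.relIndex_eq_one.1 h
  · exfalso
    rw [h] at hrel
    have hC : (Subgroup.centralizer {g}).index = 1 :=
      Nat.eq_of_mul_eq_mul_left hk.pos (by linarith)
    rw [Subgroup.index_eq_one] at hC
    have hcen : Subgroup.zpowers g ≤ Subgroup.center G := by
      rw [Subgroup.zpowers_le, Subgroup.mem_center_iff]
      intro x
      have hx : x ∈ Subgroup.centralizer {g} := hC ▸ Subgroup.mem_top x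
      exact (Subgroup.mem_centralizer_iff.1 hx g rfl).symm
    haveI : (Subgroup.zpowers g).Normal := by
      refine ⟨fun n hn x => ?_⟩
      rw [Subgroup.mem_center_iff.1 (hcen hn) x]
      simpa using hn
    haveI := Fact.mk hk
    haveI : IsCyclic (G ⧸ Subgroup.zpowers g) := isCyclic_of_prime_card (Subgroup.index_eq_card _).symm
    exact hnab fun a b => commutative_of_cyclic_center_quotient
      (QuotientGroup.mk' (Subgroup.zpowers g)) (by simpa using hcen) a b
end

section
/- Let p < q be primes and let G be a nonabelian group of order p·q (so necessarily p divides q−1). Let Q be the unique subgroup of G of order q and let P be a subgroup of G of order p. Then for every g ∈ G: p·|Fix_{G/P}(g)| + |Fix_{G/Q}(g)| equals p·q + p if g = 1 and equals p otherwise. Consequently, the disjoint union of p copies of G/P and one copy of G/Q is linearly equivalent to the disjoint union of p one-point G-sets and one copy of G with its regular action, and these two G-sets form an unbalanced pair. -/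
open MulAction

section helpers

lemma aux_fix_iff {G : Type} [Group G] (H : Subgroup G) (g x : G) :
    (QuotientGroup.mk x : G ⧸ H) ∈ fixedBy (G ⧸ H) g ↔ x⁻¹ * g * x ∈ H := by
  rw [mem_fixedBy, MulAction.Quotient.smul_mk, eq_comm, QuotientGroup.eq, smul_eq_mul, mul_assoc]

lemma aux_prime_sub {G : Type} [Group G] [Finite G] {p : ℕ} (hp : p.Prime) (P K : Subgroup G)
    (hP : Nat.card P = p) (h : G) (h1 : h ≠ 1) (hhP : h ∈ P) (hK : h ∈ K) : P ≤ K := by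
  have hd : Nat.card (P ⊓ K : Subgroup G) ∣ p := hP ▸ Subgroup.card_dvd_of_le inf_le_left
  rcases (Nat.dvd_prime hp).1 hd with h2 | h2
  · rw [Subgroup.card_eq_one] at h2
    have : h ∈ P ⊓ K := ⟨hhP, hK⟩
    rw [h2] at this
    exact absurd (Subgroup.mem_bot.1 this) h1
  · have := Subgroup.eq_of_le_of_card_ge (inf_le_left : P ⊓ K ≤ P) (by rw [h2, hP])
    exact inf_eq_left.1 this

variable {p q : ℕ} {G : Type} [Group G] [Fintype G]

lemma aux_normal (hp : p.Prime) (hq : q.Prime) (hpq : p < q) (hG : Fintype.card G = p * q)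
    (Q : Subgroup G) (hQ : Nat.card Q = q) : Q.Normal := by
  have hi : Q.index = p := by
    have := Q.card_mul_index
    rw [hQ, Nat.card_eq_fintype_card, hG, mul_comm] at this
    exact Nat.eq_of_mul_eq_mul_right hq.pos this
  apply Subgroup.normal_of_index_eq_minFac_card
  rw [hi, Nat.card_eq_fintype_card, hG]
  refine le_antisymm ?_ (Nat.minFac_le_of_dvd hp.two_le (dvd_mul_right _ _))
  have hm : (p * q).minFac.Prime := Nat.minFac_prime (by nlinarith [hp.two_le, hq.two_le])
  rcases hm.dvd_mul.1 (Nat.minFac_dvd (p * q)) with h | h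
  · exact ((Nat.prime_dvd_prime_iff_eq hm hp).1 h).ge
  · rw [(Nat.prime_dvd_prime_iff_eq hm hq).1 h]; exact hpq.le

lemma aux_disj (hp : p.Prime) (hq : q.Prime) (hpq : p < q) 
    (Q P : Subgroup G) (hQ : Nat.card Q = q) (hP : Nat.card P = p) (h : G) (h1 : h ∈ Q)
    (h2 : h ∈ P) : h = 1 := by
  by_contra hh
  have := Subgroup.card_le_of_le (aux_prime_sub hq Q P hQ h hh h1 h2)
  omega

lemma aux_not_normal (hp : p.Prime) (hq : q.Prime) (hpq : p < q) (hG : Fintype.card G = p * q)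
    (hnab : ¬ ∀ a b : G, a * b = b * a)
    (Q P : Subgroup G) (hQ : Nat.card Q = q) (hP : Nat.card P = p) : ¬ P.Normal := by
  intro hPn
  have hQn := aux_normal hp hq hpq hG Q hQ
  apply hnab
  have hd : Disjoint P Q := by
    rw [Subgroup.disjoint_def]
    intro x h1 h2
    exact aux_disj hp hq hpq Q P hQ hP x h2 h1
  have hPc : ∀ x ∈ P, ∀ y ∈ P, x * y = y * x := by
    have := Fact.mk hp
    have := isCyclic_of_prime_card hP
    intro x hx y hy
    have := (IsCyclic.isMulCommutative (α := P)).is_comm.comm ⟨x, hx⟩ ⟨y, hy⟩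
    exact congrArg Subtype.val this
  have hQc : ∀ x ∈ Q, ∀ y ∈ Q, x * y = y * x := by
    have := Fact.mk hq
    have := isCyclic_of_prime_card hQ
    intro x hx y hy
    have := (IsCyclic.isMulCommutative (α := Q)).is_comm.comm ⟨x, hx⟩ ⟨y, hy⟩
    exact congrArg Subtype.val this
  have hPQ : ∀ x ∈ P, ∀ y ∈ Q, x * y = y * x := fun x hx y hy =>
    Subgroup.commute_of_normal_of_disjoint P Q hPn hQn hd x y hx hy
  have hsup : P ⊔ Q = ⊤ := by
    apply Subgroup.eq_top_of_card_eq
    rw [Nat.card_eq_fintype_card (α := G), hG]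
    apply Nat.dvd_antisymm
    · rw [← hG, ← Nat.card_eq_fintype_card]; exact Subgroup.card_subgroup_dvd_card _
    · apply Nat.Coprime.mul_dvd_of_dvd_of_dvd ((Nat.coprime_primes hp hq).2 hpq.ne)
      · rw [← hP]; exact Subgroup.card_dvd_of_le le_sup_left
      · rw [← hQ]; exact Subgroup.card_dvd_of_le le_sup_right
  have hP' : P ≤ Subgroup.center G := by
    intro x hx
    rw [Subgroup.mem_center_iff]
    have : (⊤ : Subgroup G) ≤ Subgroup.centralizer {x} := by
      rw [← hsup]
      refine sup_le ?_ ?_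
      · intro y hy; rw [Subgroup.mem_centralizer_singleton_iff]; first | exact hPc x hx y hy | exact hPc y hy x hx
      · intro y hy; rw [Subgroup.mem_centralizer_singleton_iff]; first | exact hPQ x hx y hy | exact (hPQ x hx y hy).symm
    intro g
    have := this (Subgroup.mem_top g)
    rw [Subgroup.mem_centralizer_singleton_iff] at this
    first | exact this | exact this.symm
  have hQ' : Q ≤ Subgroup.center G := by
    intro x hx
    rw [Subgroup.mem_center_iff]
    have : (⊤ : Subgroup G) ≤ Subgroup.centralizer {x} := by
      rw [← hsup]
      refine sup_le ?_ ?_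
      · intro y hy; rw [Subgroup.mem_centralizer_singleton_iff]; first | exact hPQ y hy x hx | exact (hPQ y hy x hx).symm
      · intro y hy; rw [Subgroup.mem_centralizer_singleton_iff]; first | exact hQc x hx y hy | exact hQc y hy x hx
    intro g
    have := this (Subgroup.mem_top g)
    rw [Subgroup.mem_centralizer_singleton_iff] at this
    first | exact this | exact this.symm
  intro a b
  have hb : b ∈ Subgroup.center G := (hsup ▸ sup_le hP' hQ' : (⊤ : Subgroup G) ≤ _) (Subgroup.mem_top b)
  exact Subgroup.mem_center_iff.1 hb a

lemma aux_norm (hp : p.Prime) (hq : q.Prime) (hpq : p < q) (hG : Fintype.card G = p * q)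
    (hnab : ¬ ∀ a b : G, a * b = b * a)
    (Q P : Subgroup G) (hQ : Nat.card Q = q) (hP : Nat.card P = p) :
    Subgroup.normalizer (P : Set G) = P := by
  have hle : P ≤ Subgroup.normalizer (P : Set G) := Subgroup.le_normalizer
  obtain ⟨k, hk⟩ := Subgroup.card_dvd_of_le hle
  have hd := Subgroup.card_subgroup_dvd_card (Subgroup.normalizer (P : Set G))
  rw [Nat.card_eq_fintype_card (α := G), hG, hk, hP] at hd
  rcases (Nat.dvd_prime hq).1 (Nat.dvd_of_mul_dvd_mul_left hp.pos hd) with h | h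
  · exact (Subgroup.eq_of_le_of_card_ge hle (by rw [hk, h, mul_one])).symm
  · exfalso
    apply aux_not_normal hp hq hpq hG hnab Q P hQ hP
    apply Subgroup.normalizer_eq_top_iff.1
    apply Subgroup.eq_top_of_card_eq
    rw [hk, hP, h, Nat.card_eq_fintype_card, hG]

lemma aux_le_one (hp : p.Prime) (hq : q.Prime) (hpq : p < q) (hG : Fintype.card G = p * q)
    (hnab : ¬ ∀ a b : G, a * b = b * a)
    (Q P : Subgroup G) (hQ : Nat.card Q = q) (hP : Nat.card P = p) (g : G) (hg : g ≠ 1) :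
    Nat.card (fixedBy (G ⧸ P) g) ≤ 1 := by
  rw [Finite.card_le_one_iff_subsingleton]
  constructor
  rintro ⟨x, hx⟩ ⟨y, hy⟩
  apply Subtype.ext
  show x = y
  induction x using QuotientGroup.induction_on with | H x => ?_
  induction y using QuotientGroup.induction_on with | H y => ?_
  rw [aux_fix_iff] at hx hy
  rw [QuotientGroup.eq, ← aux_norm hp hq hpq hG hnab Q P hQ hP]
  have hle : P ≤ P.map (MulAut.conj (x⁻¹ * y)).toMonoidHom := by
    apply aux_prime_sub hp P _ hP (x⁻¹ * g * x) _ hx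
    · refine ⟨y⁻¹ * g * y, hy, ?_⟩
      simp [mul_assoc]
    · intro h
      apply hg
      have : g = x * (x⁻¹ * g * x) * x⁻¹ := by group
      rw [this, h]; group
  have heq : P = P.map (MulAut.conj (x⁻¹ * y)).toMonoidHom := by
    apply Subgroup.eq_of_le_of_card_ge hle
    exact (Subgroup.card_map_of_injective (MulAut.conj (x⁻¹ * y)).injective).le
  rw [Subgroup.mem_normalizer_iff]
  intro h
  constructor
  · intro hh
    show _ ∈ P
    rw [heq]
    exact ⟨h, hh, rfl⟩
  · intro hh
    have hh : _ ∈ P := hh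
    rw [heq] at hh
    obtain ⟨k, hk, hke⟩ := hh
    have : k = h := (MulAut.conj (x⁻¹ * y)).injective hke
    exact this ▸ hk

lemma aux_P_zero (hp : p.Prime) (hq : q.Prime) (hpq : p < q) (hG : Fintype.card G = p * q)
    (Q P : Subgroup G) (hQ : Nat.card Q = q) (hP : Nat.card P = p) (g : G) (hg : g ≠ 1)
    (hgQ : g ∈ Q) : fixedBy (G ⧸ P) g = ∅ := by
  have hQn := aux_normal hp hq hpq hG Q hQ
  rw [Set.eq_empty_iff_forall_notMem]
  intro x hx
  induction x using QuotientGroup.induction_on with | H x => ?_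
  rw [aux_fix_iff] at hx
  have h1 : x⁻¹ * g * x ∈ Q := by simpa using hQn.conj_mem g hgQ x⁻¹
  have h := aux_disj hp hq hpq Q P hQ hP _ h1 hx
  apply hg
  have : g = x * (x⁻¹ * g * x) * x⁻¹ := by group
  rw [this, h]; group

lemma aux_Q_zero (hp : p.Prime) (hq : q.Prime) (hpq : p < q) (hG : Fintype.card G = p * q)
    (Q : Subgroup G) (hQ : Nat.card Q = q) (g : G)
    (hgQ : g ∉ Q) : fixedBy (G ⧸ Q) g = ∅ := by
  have hQn := aux_normal hp hq hpq hG Q hQ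
  rw [Set.eq_empty_iff_forall_notMem]
  intro x hx
  induction x using QuotientGroup.induction_on with | H x => ?_
  rw [aux_fix_iff] at hx
  apply hgQ
  have := hQn.conj_mem _ hx x
  simpa [mul_assoc] using this

lemma aux_Q_all (hp : p.Prime) (hq : q.Prime) (hpq : p < q) (hG : Fintype.card G = p * q)
    (Q : Subgroup G) (hQ : Nat.card Q = q) (g : G)
    (hgQ : g ∈ Q) : fixedBy (G ⧸ Q) g = Set.univ := by
  have hQn := aux_normal hp hq hpq hG Q hQ
  rw [Set.eq_univ_iff_forall]
  intro x
  induction x using QuotientGroup.induction_on with | H x => ?_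
  rw [aux_fix_iff]
  simpa using hQn.conj_mem g hgQ x⁻¹

lemma aux_cardP (hp : p.Prime) (hG : Fintype.card G = p * q)
    (P : Subgroup G) (hP : Nat.card P = p) : Nat.card (G ⧸ P) = q := by
  have := P.card_mul_index
  rw [hP, Nat.card_eq_fintype_card, hG] at this
  exact Nat.eq_of_mul_eq_mul_left hp.pos this

lemma aux_P_one (hp : p.Prime) (hq : q.Prime) (hpq : p < q) (hG : Fintype.card G = p * q)
    (hnab : ¬ ∀ a b : G, a * b = b * a)
    (Q P : Subgroup G) (hQ : Nat.card Q = q) (hP : Nat.card P = p) (g : G) (hg : g ∉ Q) :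
    Nat.card (fixedBy (G ⧸ P) g) = 1 := by
  classical
  have hB : ∑ g : G, Nat.card (fixedBy (G ⧸ P) g) = p * q := by
    have h := MulAction.sum_card_fixedBy_eq_card_orbits_mul_card_group G (G ⧸ P)
    have h1 : Fintype.card (Quotient (orbitRel G (G ⧸ P))) = 1 := by
      rw [Fintype.card_eq_one_iff]
      refine ⟨Quotient.mk _ (QuotientGroup.mk 1), fun y => ?_⟩
      induction y using Quotient.inductionOn with | h y => ?_
      exact Quotient.sound (MulAction.exists_smul_eq G (QuotientGroup.mk 1) y)
    rw [h1, one_mul, hG] at h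
    simpa [Nat.card_eq_fintype_card] using h
  have hle : ∀ h ∈ (Finset.univ : Finset G), Nat.card (fixedBy (G ⧸ P) h) ≤
      (if h = 1 then q else 0) + (if h ∈ Q then 0 else 1) := by
    intro h _
    by_cases h1 : h = 1
    · subst h1
      rw [if_pos rfl, if_pos Q.one_mem, fixedBy_one_eq_univ, Nat.card_coe_set_eq, Set.ncard_univ,
        aux_cardP hp hG P hP, add_zero]
    · by_cases h2 : h ∈ Q
      · simp [h1, h2, aux_P_zero hp hq hpq hG Q P hQ hP h h1 h2]
      · simpa [h1, h2] using aux_le_one hp hq hpq hG hnab Q P hQ hP h h1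
  have hcQ : (Finset.univ.filter (fun h : G => h ∈ Q)).card = q := by
    rw [← hQ, Nat.card_eq_fintype_card, Fintype.card_subtype]
  have hcQ' : (Finset.univ.filter (fun h : G => h ∈ Q)).card +
      (Finset.univ.filter (fun h : G => ¬ h ∈ Q)).card = p * q := by
    rw [Finset.card_filter_add_card_filter_not, Finset.card_univ, hG]
  have hs : ∑ h : G, ((if h = 1 then q else 0) + (if h ∈ Q then 0 else 1)) = p * q := by
    rw [Finset.sum_add_distrib, Finset.sum_ite_eq' Finset.univ (1 : G), if_pos (Finset.mem_univ _), ← hcQ', hcQ, Finset.card_filter]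
    simp only [ite_not]
  have := (Finset.sum_eq_sum_iff_of_le hle).1 (hB.trans hs.symm) g (Finset.mem_univ g)
  rw [this, if_neg hg, if_neg (fun h : g = 1 => hg (h.symm ▸ Q.one_mem))]

lemma aux_part1 [DecidableEq G] (hp : p.Prime) (hq : q.Prime) (hpq : p < q)
    (hG : Fintype.card G = p * q)
    (hnab : ¬ ∀ a b : G, a * b = b * a)
    (Q P : Subgroup G) (hQ : Nat.card Q = q) (hP : Nat.card P = p) (g : G) :
    p * Nat.card (fixedBy (G ⧸ P) g) + Nat.card (fixedBy (G ⧸ Q) g)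
          = if g = 1 then p * q + p else p := by
  have hQi := aux_cardP hq (hG.trans (mul_comm p q)) Q hQ
  have hPi := aux_cardP hp hG P hP
  by_cases h2 : g ∈ Q
  · rw [aux_Q_all hp hq hpq hG Q hQ g h2, Nat.card_coe_set_eq Set.univ, Set.ncard_univ, hQi]
    split_ifs with h1
    · rw [h1, fixedBy_one_eq_univ, Nat.card_coe_set_eq, Set.ncard_univ, hPi]
    · simp [aux_P_zero hp hq hpq hG Q P hQ hP g h1 h2]
  · rw [if_neg (fun h : g = 1 => h2 (h.symm ▸ Q.one_mem)), aux_P_one hp hq hpq hG hnab Q P hQ hP g h2,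
      aux_Q_zero hp hq hpq hG Q hQ g h2]
    simp

lemma aux_sum_s18 (X Y : Type) [Finite X] [Finite Y] [MulAction G X] [MulAction G Y] (p : ℕ) (g : G) :
    Nat.card (fixedBy (((_ : Fin p) × X) ⊕ Y) g)
      = p * Nat.card (fixedBy X g) + Nat.card (fixedBy Y g) := by
  have e : fixedBy (((_ : Fin p) × X) ⊕ Y) g ≃ (Fin p × fixedBy X g) ⊕ fixedBy Y g :=
    { toFun := fun z => match z with
        | ⟨Sum.inl ⟨i, x⟩, h⟩ => Sum.inl (i, ⟨x, by simpa [mem_fixedBy] using h⟩)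
        | ⟨Sum.inr y, h⟩ => Sum.inr ⟨y, by simpa [mem_fixedBy] using h⟩
      invFun := fun z => match z with
        | Sum.inl (i, ⟨x, h⟩) => ⟨Sum.inl ⟨i, x⟩, by simpa [mem_fixedBy] using h⟩
        | Sum.inr ⟨y, h⟩ => ⟨Sum.inr y, by simpa [mem_fixedBy] using h⟩
      left_inv := by rintro ⟨⟨i, x⟩ | y, h⟩ <;> rfl
      right_inv := by rintro (⟨i, x, h⟩ | ⟨y, h⟩) <;> rfl }
  rw [Nat.card_congr e, Nat.card_sum, Nat.card_prod, Nat.card_fin]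

lemma aux_orbit_one (X : Type) [MulAction G X] (x : X) :
    Nat.card (orbitRel.Quotient.orbit (Quotient.mk (orbitRel G X) x)) = 1 ↔ ∀ g : G, g • x = x := by
  have he : orbitRel.Quotient.orbit (Quotient.mk (orbitRel G X) x) = orbit G x :=
    orbitRel.Quotient.orbit_mk x
  rw [he, Nat.card_eq_one_iff_unique]
  constructor
  · rintro ⟨h, _⟩ g
    exact congrArg Subtype.val (h.elim ⟨g • x, mem_orbit x g⟩ ⟨x, mem_orbit_self x⟩)
  · intro h
    refine ⟨⟨?_⟩, ⟨⟨x, mem_orbit_self x⟩⟩⟩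
    rintro ⟨_, a, rfl⟩ ⟨_, b, rfl⟩
    exact Subtype.ext ((h a).trans (h b).symm)

end helpers


/-- Let `G` be a nonabelian group of order `p * q` with `p < q` primes, `Q ≤ G` the
subgroup of order `q` and `P ≤ G` a subgroup of order `p`.  Then for every `g ∈ G`,
`p ⬝ |Fix_{G/P}(g)| + |Fix_{G/Q}(g)|` equals `p ⬝ q + p` if `g = 1` and `p` otherwise.
Consequently, the disjoint union of `p` copies of `G ⧸ P` with one copy of `G ⧸ Q` and the
disjoint union of `p` one-point `G`-sets (copies of `G ⧸ ⊤`) with one copy of `G` (regular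
action) are linearly equivalent and form an unbalanced pair. -/
theorem nonabelian_pq_unbalanced_pair
    (p q : ℕ) (hp : p.Prime) (hq : q.Prime) (hpq : p < q)
    (G : Type) [Group G] [Fintype G] [DecidableEq G] (hG : Fintype.card G = p * q)
    (hnab : ¬ ∀ a b : G, a * b = b * a)
    (Q P : Subgroup G) (hQ : Nat.card Q = q) (hP : Nat.card P = p) :
    (∀ g : G,
        p * Nat.card (fixedBy (G ⧸ P) g) + Nat.card (fixedBy (G ⧸ Q) g)
          = if g = 1 then p * q + p else p) ∧
      IsUnbalancedPair G
        (((_ : Fin p) × (G ⧸ P)) ⊕ (G ⧸ Q))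
        (((_ : Fin p) × (G ⧸ (⊤ : Subgroup G))) ⊕ G) := by
  have h1 := aux_part1 hp hq hpq hG hnab Q P hQ hP
  refine ⟨h1, ?_, 1, ?_⟩
  · intro g
    rw [aux_sum_s18, aux_sum_s18, h1]
    have ht : fixedBy (G ⧸ (⊤ : Subgroup G)) g = Set.univ := by
      rw [Set.eq_univ_iff_forall]
      intro x
      induction x using QuotientGroup.induction_on with | H x => ?_
      rw [aux_fix_iff]
      exact Subgroup.mem_top _
    have htc : Nat.card (G ⧸ (⊤ : Subgroup G)) = 1 := Subgroup.index_top
    rw [ht, Nat.card_coe_set_eq, Set.ncard_univ, htc]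
    split_ifs with h
    · rw [h, fixedBy_one_eq_univ, Nat.card_coe_set_eq, Set.ncard_univ, Nat.card_eq_fintype_card, hG]
      ring
    · have : fixedBy G g = ∅ := by
        rw [Set.eq_empty_iff_forall_notMem]
        intro x hx
        rw [mem_fixedBy, smul_eq_mul, mul_eq_right] at hx
        exact h hx
      simp [this]
  · have hX : orbitCountOfSize G (((_ : Fin p) × (G ⧸ P)) ⊕ (G ⧸ Q)) 1 = 0 := by
      unfold orbitCountOfSize
      rw [Nat.card_eq_zero]
      left
      constructor
      rintro ⟨o, ho⟩
      induction o using Quotient.inductionOn with | h o => ?_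
      rw [aux_orbit_one] at ho
      rcases o with ⟨i, x⟩ | y
      · obtain ⟨g, hgQ, hg⟩ : ∃ g ∈ Q, g ≠ 1 := by
          apply Q.bot_or_exists_ne_one.resolve_left
          intro h
          rw [h, Subgroup.card_bot] at hQ
          exact hq.one_lt.ne hQ
        have hz := aux_P_zero hp hq hpq hG Q P hQ hP g hg hgQ
        have : x ∈ fixedBy (G ⧸ P) g := by simpa [mem_fixedBy] using ho g
        rw [hz] at this
        exact this
      · obtain ⟨g, hg⟩ : ∃ g, g ∉ Q := by
          by_contra! h
          have hQt : Q = ⊤ := (Subgroup.eq_top_iff' Q).2 h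
          rw [hQt, Subgroup.card_top, Nat.card_eq_fintype_card, hG] at hQ
          nlinarith [hp.two_le, hq.two_le]
        have hz := aux_Q_zero hp hq hpq hG Q hQ g hg
        have : y ∈ fixedBy (G ⧸ Q) g := by simpa [mem_fixedBy] using ho g
        rw [hz] at this
        exact this
    rw [hX]
    apply Ne.symm
    unfold orbitCountOfSize
    rw [Nat.card_ne_zero]
    constructor
    · refine ⟨⟨Quotient.mk _ (Sum.inl ⟨⟨0, hp.pos⟩, QuotientGroup.mk 1⟩), ?_⟩⟩
      rw [aux_orbit_one]
      intro g
      have : g • (QuotientGroup.mk 1 : G ⧸ (⊤ : Subgroup G)) = QuotientGroup.mk 1 :=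
        (aux_fix_iff ⊤ g 1).2 (Subgroup.mem_top _)
      rw [Sum.smul_inl, Sigma.smul_mk, this]
    · have : Finite (orbitRel.Quotient G (((_ : Fin p) × (G ⧸ (⊤ : Subgroup G))) ⊕ G)) :=
        Quotient.finite _
      infer_instance
end

section
/- For every natural number k, the quadratic forms 4m²+n² (counted twice) and 2m²+2n² together represent k over the integers the same number of times as the forms m²+n² and 4m²+4n² (counted twice) together: 2·#{(m,n) ∈ ℤ² : 4m²+n² = k} + #{(m,n) ∈ ℤ² : 2m²+2n² = k} = #{(m,n) ∈ ℤ² : m²+n² = k} + 2·#{(m,n) ∈ ℤ² : 4m²+4n² = k}. -/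
theorem rni_aux (Q : ℤ × ℤ → Prop) (F : Finset (ℤ × ℤ)) (f : ℤ × ℤ → ℤ × ℤ)
    (hf : Function.Injective f) (h1 : ∀ p, Q p → f p ∈ F)
    (h2 : ∀ q ∈ F, ∃ p, Q p ∧ f p = q) : Nat.card {p // Q p} = F.card := by
  rw [← Fintype.card_coe F, ← Nat.card_eq_fintype_card]
  refine Nat.card_eq_of_bijective (fun p : {p // Q p} => (⟨f p.1, h1 _ p.2⟩ : F)) ⟨?_, ?_⟩
  · intro a b h
    exact Subtype.ext (hf (congrArg Subtype.val h))
  · rintro ⟨q, hq⟩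
    obtain ⟨p, hp, rfl⟩ := h2 q hq
    exact ⟨⟨p, hp⟩, rfl⟩

theorem rni_fin (k : ℕ) : ∃ T : Finset (ℤ × ℤ), ∀ x y : ℤ, (x, y) ∈ T ↔ x ^ 2 + y ^ 2 = k := by
  refine ⟨((Finset.Icc (-k : ℤ) k) ×ˢ (Finset.Icc (-k : ℤ) k)).filter
    (fun p => p.1 ^ 2 + p.2 ^ 2 = k), fun x y => ?_⟩
  simp only [Finset.mem_filter, Finset.mem_product, Finset.mem_Icc, and_iff_right_iff_imp]
  intro h
  have hx := Int.le_self_sq x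
  have hx' := Int.le_self_sq (-x)
  have hy := Int.le_self_sq y
  have hy' := Int.le_self_sq (-y)
  refine ⟨⟨?_, ?_⟩, ?_, ?_⟩ <;> nlinarith [sq_nonneg x, sq_nonneg y]

/-- For every natural number `k`, the quadratic forms `4m² + n²` (counted twice) and
`2m² + 2n²` together represent `k` over the integers the same number of times as the forms
`m² + n²` and `4m² + 4n²` (counted twice) together. -/
theorem representation_numbers_identity (k : ℕ) :
    2 * Nat.card {mn : ℤ × ℤ // 4 * mn.1 ^ 2 + mn.2 ^ 2 = (k : ℤ)}
        + Nat.card {mn : ℤ × ℤ // 2 * mn.1 ^ 2 + 2 * mn.2 ^ 2 = (k : ℤ)}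
      = Nat.card {mn : ℤ × ℤ // mn.1 ^ 2 + mn.2 ^ 2 = (k : ℤ)}
        + 2 * Nat.card {mn : ℤ × ℤ // 4 * mn.1 ^ 2 + 4 * mn.2 ^ 2 = (k : ℤ)} := by
  obtain ⟨T, hT⟩ := rni_fin k
  have hA : Nat.card {mn : ℤ × ℤ // 4 * mn.1 ^ 2 + mn.2 ^ 2 = (k : ℤ)}
      = (T.filter (fun p => p.1 % 2 = 0)).card := by
    refine rni_aux _ _ (fun p => (2 * p.1, p.2)) ?_ ?_ ?_
    · rintro ⟨a, b⟩ ⟨c, d⟩ h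
      simp only [Prod.mk.injEq] at h ⊢
      omega
    · rintro ⟨a, b⟩ h
      simp only [Finset.mem_filter, hT] at h ⊢
      exact ⟨by linarith, by omega⟩
    · rintro ⟨a, b⟩ h
      simp only [Finset.mem_filter, hT] at h
      obtain ⟨c, rfl⟩ : ∃ c, a = 2 * c := ⟨a / 2, by omega⟩
      exact ⟨(c, b), by dsimp only; linarith, rfl⟩
  have hB : Nat.card {mn : ℤ × ℤ // 4 * mn.1 ^ 2 + mn.2 ^ 2 = (k : ℤ)}
      = (T.filter (fun p => p.2 % 2 = 0)).card := by
    refine rni_aux _ _ (fun p => (p.2, 2 * p.1)) ?_ ?_ ?_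
    · rintro ⟨a, b⟩ ⟨c, d⟩ h
      simp only [Prod.mk.injEq] at h ⊢
      omega
    · rintro ⟨a, b⟩ h
      simp only [Finset.mem_filter, hT] at h ⊢
      exact ⟨by linarith, by omega⟩
    · rintro ⟨a, b⟩ h
      simp only [Finset.mem_filter, hT] at h
      obtain ⟨c, rfl⟩ : ∃ c, b = 2 * c := ⟨b / 2, by omega⟩
      exact ⟨(c, a), by dsimp only; linarith, rfl⟩
  have hC : Nat.card {mn : ℤ × ℤ // 2 * mn.1 ^ 2 + 2 * mn.2 ^ 2 = (k : ℤ)}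
      = (T.filter (fun p => (p.1 + p.2) % 2 = 0)).card := by
    refine rni_aux _ _ (fun p => (p.1 + p.2, p.1 - p.2)) ?_ ?_ ?_
    · rintro ⟨a, b⟩ ⟨c, d⟩ h
      simp only [Prod.mk.injEq] at h ⊢
      omega
    · rintro ⟨a, b⟩ h
      simp only [Finset.mem_filter, hT] at h ⊢
      exact ⟨by linarith, by omega⟩
    · rintro ⟨a, b⟩ h
      simp only [Finset.mem_filter, hT] at h
      obtain ⟨c, hc⟩ : ∃ c, a = 2 * c - b := ⟨(a + b) / 2, by omega⟩
      subst hc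
      refine ⟨(c, c - b), by dsimp only; linarith, ?_⟩
      simp only [Prod.mk.injEq]
      omega
  have hD : Nat.card {mn : ℤ × ℤ // 4 * mn.1 ^ 2 + 4 * mn.2 ^ 2 = (k : ℤ)}
      = (T.filter (fun p => p.1 % 2 = 0 ∧ p.2 % 2 = 0)).card := by
    refine rni_aux _ _ (fun p => (2 * p.1, 2 * p.2)) ?_ ?_ ?_
    · rintro ⟨a, b⟩ ⟨c, d⟩ h
      simp only [Prod.mk.injEq] at h ⊢
      omega
    · rintro ⟨a, b⟩ h
      simp only [Finset.mem_filter, hT] at h ⊢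
      exact ⟨by linarith, by omega⟩
    · rintro ⟨a, b⟩ h
      simp only [Finset.mem_filter, hT] at h
      obtain ⟨c, rfl⟩ : ∃ c, a = 2 * c := ⟨a / 2, by omega⟩
      obtain ⟨d, rfl⟩ : ∃ d, b = 2 * d := ⟨b / 2, by omega⟩
      exact ⟨(c, d), by dsimp only; linarith, rfl⟩
  have hS : Nat.card {mn : ℤ × ℤ // mn.1 ^ 2 + mn.2 ^ 2 = (k : ℤ)} = T.card :=
    rni_aux _ _ id Function.injective_id (fun p h => (hT p.1 p.2).2 h)
      (fun q h => ⟨q, (hT q.1 q.2).1 h, rfl⟩)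
  rw [two_mul (Nat.card {mn : ℤ × ℤ // 4 * mn.1 ^ 2 + mn.2 ^ 2 = (k : ℤ)})]
  nth_rewrite 1 [hA]
  rw [hB, hC, hD, hS, Finset.card_eq_sum_ones T]
  simp only [Finset.card_filter, Finset.mul_sum, ← Finset.sum_add_distrib]
  refine Finset.sum_congr rfl fun p _ => ?_
  split_ifs <;> omega
end
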